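/- arXiv:2005.12009 — 6 statements merged into one kernel-verified Lean document; each statement's English description precedes it below -/
import Mathlib

section
/- For every m̄ ∈ ℕ, every c̄ ≥ 1 and every k ∈ ℕ there exists a constant C > 0 (depending only on m̄, c̄ and k) with the following property: for every compact interval [a,b], every mesh 𝒯 of [a,b] that is piecewise quasi-uniform with parameters (m̄, c̄), and every v ∈ 𝕊_k(𝒯), one has ∫_a^b ∫_a^b (v(x) − v(y))²/(x − y)² dx dy ≤ C · log(1 + R(𝒯)) · Σ_{i=1}^{r} (sup_{x ∈ e_i} |v(x)|)², where R(𝒯) is the ratio of the largest to the smallest element length of 𝒯. -/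
open MeasureTheory Set

lemma markov01 (k : ℕ) : ∃ C : ℝ, 0 ≤ C ∧ ∀ q : Polynomial ℝ, q.natDegree ≤ k → ∀ M : ℝ,
    (∀ u ∈ Ioo (0:ℝ) 1, |q.eval u| ≤ M) → ∀ u ∈ Icc (0:ℝ) 1, ∀ w ∈ Icc (0:ℝ) 1,
    |q.eval u - q.eval w| ≤ C * M * |u - w| := by
  have hlip : ∀ p : Polynomial ℝ, ∃ D : ℝ, 0 ≤ D ∧ ∀ u ∈ Icc (0:ℝ) 1, ∀ w ∈ Icc (0:ℝ) 1,
      |p.eval u - p.eval w| ≤ D * |u - w| := by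
    intro p
    obtain ⟨D, hD⟩ := (isCompact_Icc (a := (0:ℝ)) (b := 1)).exists_bound_of_continuousOn
      (f := fun x => p.derivative.eval x) (p.derivative.continuous.continuousOn)
    refine ⟨max D 0, le_max_right _ _, fun u hu w hw => ?_⟩
    have := (convex_Icc (0:ℝ) 1).norm_image_sub_le_of_norm_hasDerivWithin_le
      (f := fun x => p.eval x) (f' := fun x => p.derivative.eval x) (C := max D 0)
      (fun x _ => (p.hasDerivAt x).hasDerivWithinAt)
      (fun x hx => (hD x hx).trans (le_max_left _ _)) hw hu
    simpa [Real.norm_eq_abs] using this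
  let nd : ℕ → ℝ := fun i => ((i:ℝ) + 1) / ((k:ℝ) + 2)
  have hinj : Function.Injective nd := by
    intro i j h
    have hk : ((k:ℝ) + 2) ≠ 0 := by positivity
    simp only [nd] at h
    field_simp at h
    exact_mod_cast (add_right_cancel h)
  let s := Finset.range (k+1)
  choose D hD0 hD using hlip
  refine ⟨∑ i ∈ s, D (Lagrange.basis s nd i), Finset.sum_nonneg fun i _ => hD0 _, ?_⟩
  intro q hq M hM u hu w hw
  have hM' : ∀ i ∈ s, |q.eval (nd i)| ≤ M := by
    intro i hi
    apply hM
    have hi' : i < k + 1 := Finset.mem_range.mp hi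
    have : (i:ℝ) < k + 1 := by exact_mod_cast hi'
    constructor
    · positivity
    · simp only [nd]; rw [div_lt_one (by positivity)]; linarith
  have hdeg : q.degree < (s.card : ℕ) := by
    apply lt_of_le_of_lt Polynomial.degree_le_natDegree
    simp only [s, Finset.card_range]
    exact_mod_cast Nat.lt_succ_of_le hq
  have hq' := Lagrange.eq_interpolate (s := s) (v := nd) hinj.injOn hdeg
  have key : ∀ x, q.eval x = ∑ i ∈ s, q.eval (nd i) * (Lagrange.basis s nd i).eval x := by
    intro x
    conv_lhs => rw [hq']
    simp [Lagrange.interpolate_apply, Polynomial.eval_finsetSum]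
  rw [key u, key w, ← Finset.sum_sub_distrib]
  refine (Finset.abs_sum_le_sum_abs _ _).trans ?_
  rw [Finset.sum_mul, Finset.sum_mul]
  refine Finset.sum_le_sum fun i hi => ?_
  rw [← mul_sub, abs_mul]
  calc _ ≤ M * (D (Lagrange.basis s nd i) * |u - w|) :=
        mul_le_mul (hM' i hi) (hD _ u hu w hw) (abs_nonneg _) ((abs_nonneg _).trans (hM' i hi))
    _ = _ := by ring

lemma markov (k : ℕ) : ∃ C : ℝ, 0 ≤ C ∧ ∀ q : Polynomial ℝ, q.natDegree ≤ k → ∀ M x y : ℝ, x < y →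
    (∀ u ∈ Ioo x y, |q.eval u| ≤ M) → ∀ u ∈ Icc x y, ∀ w ∈ Icc x y,
    |q.eval u - q.eval w| ≤ C * M / (y - x) * |u - w| := by
  obtain ⟨C, hC, h⟩ := markov01 k
  refine ⟨C, hC, fun q hq M x y hxy hM u hu w hw => ?_⟩
  have hh : 0 < y - x := sub_pos.mpr hxy
  have := h (q.comp (Polynomial.C x + Polynomial.C (y - x) * Polynomial.X)) (by
    refine Polynomial.natDegree_comp_le.trans ?_
    have : (Polynomial.C x + Polynomial.C (y - x) * Polynomial.X).natDegree ≤ 1 := by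
      compute_degree
    nlinarith) M (by
    intro t ht
    simp only [Polynomial.eval_comp, Polynomial.eval_add, Polynomial.eval_C, Polynomial.eval_mul, Polynomial.eval_X]
    apply hM
    constructor <;> nlinarith [ht.1, ht.2]) ((u - x)/(y-x)) ⟨div_nonneg (by linarith [hu.1]) hh.le, by
      rw [div_le_one hh]; linarith [hu.2]⟩ ((w - x)/(y-x)) ⟨div_nonneg (by linarith [hw.1]) hh.le, by
      rw [div_le_one hh]; linarith [hw.2]⟩
  simp only [Polynomial.eval_comp, Polynomial.eval_add, Polynomial.eval_C, Polynomial.eval_mul, Polynomial.eval_X] at this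
  rw [mul_div_cancel₀ _ hh.ne', mul_div_cancel₀ _ hh.ne', ← sub_div, abs_div, abs_of_pos hh] at this
  simp only [add_sub_cancel, sub_sub_sub_cancel_right] at this
  calc _ ≤ _ := this
    _ = _ := by ring

lemma lint_right {s z : ℝ} (h : s < z) :
    ∫⁻ t in Ioi z, ENNReal.ofReal (1 / (s - t)^2) ≤ ENNReal.ofReal (1 / (z - s)) := by
  have hd : ∀ t ∈ Ici z, HasDerivAt (fun t => -(t - s)⁻¹) (1 / (s - t)^2) t := by
    intro t ht
    have : t - s ≠ 0 := by have := mem_Ici.mp ht; linarith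
    have h2 : HasDerivAt (fun t => -(t - s)⁻¹) _ t := (((hasDerivAt_id' t).sub_const s).inv this).neg
    refine h2.congr_deriv ?_
    rw [show (s - t)^2 = (t - s)^2 by ring]; ring
  have hlim : Filter.Tendsto (fun t : ℝ => -(t - s)⁻¹) Filter.atTop (nhds 0) := by
    have := (tendsto_inv_atTop_zero.comp (Filter.tendsto_atTop_add_const_right Filter.atTop (-s) Filter.tendsto_id)).neg
    simpa [Function.comp_def, sub_eq_add_neg] using this
  have hi := integrableOn_Ioi_deriv_of_nonneg' hd (fun t _ => by positivity) hlim
  have he := integral_Ioi_of_hasDerivAt_of_nonneg' hd (fun t _ => by positivity) hlim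
  rw [← ofReal_integral_eq_lintegral_ofReal hi (Filter.Eventually.of_forall fun t => by positivity), he]
  simp

lemma lint_left {s z : ℝ} (h : z < s) :
    ∫⁻ t in Iio z, ENNReal.ofReal (1 / (s - t)^2) ≤ ENNReal.ofReal (1 / (s - z)) := by
  have := lint_right (s := -s) (z := -z) (by linarith)
  have e := (Measure.measurePreserving_neg (volume : Measure ℝ)).setLIntegral_comp_preimage_emb (MeasurableEquiv.neg ℝ).measurableEmbedding
    (fun t => ENNReal.ofReal (1 / (-s - t)^2)) (Ioi (-z))
  rw [← e] at this
  have e2 : (Neg.neg ⁻¹' Ioi (-z) : Set ℝ) = Iio z := by ext; simp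
  have e3 : ∀ t, (-s - -t)^2 = (s - t)^2 := fun t => by ring
  rw [e2, show -z - -s = s - z by ring] at this
  simpa only [e3] using this

lemma lint_log_right {x y z : ℝ} (h : x < y) (h2 : y < z) :
    ∫⁻ s in Ioc x y, ENNReal.ofReal (1 / (z - s)) ≤ ENNReal.ofReal (Real.log (1 + (y - x)/(z - y))) := by
  have hd : ∀ t ∈ uIcc x y, HasDerivAt (fun t => -Real.log (z - t)) (1 / (z - t)) t := by
    intro t ht
    rw [uIcc_of_le h.le] at ht
    have : z - t ≠ 0 := by linarith [ht.2]
    have h2 : HasDerivAt (fun t => -Real.log (z - t)) _ t := (((hasDerivAt_id' t).const_sub z).log this).neg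
    refine h2.congr_deriv ?_
    ring
  have hc : IntervalIntegrable (fun t => 1 / (z - t)) volume x y := by
    apply ContinuousOn.intervalIntegrable
    apply ContinuousOn.div continuousOn_const (by fun_prop)
    intro t ht
    rw [uIcc_of_le h.le] at ht
    linarith [ht.2]
  have he := intervalIntegral.integral_eq_sub_of_hasDerivAt hd hc
  rw [intervalIntegral.integral_of_le h.le] at he
  rw [← ofReal_integral_eq_lintegral_ofReal ((intervalIntegrable_iff_integrableOn_Ioc_of_le h.le).mp hc)
    ((ae_restrict_iff' measurableSet_Ioc).mpr (Filter.Eventually.of_forall fun t ht => by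
      have : 0 < z - t := by linarith [ht.2]
      positivity)), he]
  apply ENNReal.ofReal_le_ofReal
  have h3 : 0 < z - y := by linarith
  have h4 : 0 < z - x := by linarith
  rw [show 1 + (y - x)/(z-y) = (z-x)/(z-y) by field_simp; ring, Real.log_div h4.ne' h3.ne']
  linarith

lemma lint_log_left {x y z : ℝ} (h : x < y) (h2 : z < x) :
    ∫⁻ s in Ioc x y, ENNReal.ofReal (1 / (s - z)) ≤ ENNReal.ofReal (Real.log (1 + (y - x)/(x - z))) := by
  have := lint_log_right (x := -y) (y := -x) (z := -z) (by linarith) (by linarith)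
  rw [restrict_Ioc_eq_restrict_Icc] at this ⊢
  have e := (Measure.measurePreserving_neg (volume : Measure ℝ)).setLIntegral_comp_preimage_emb (MeasurableEquiv.neg ℝ).measurableEmbedding
    (fun t => ENNReal.ofReal (1 / (-z - t))) (Icc (-y) (-x))
  rw [← e] at this
  have e2 : (Neg.neg ⁻¹' Icc (-y) (-x) : Set ℝ) = Icc x y := by ext; simp
  have e3 : ∀ t, -z - -t = t - z := fun t => by ring
  rw [e2, show -x - -y = y - x by ring] at this
  simpa only [e3] using this

lemma sum_lint (ξ : ℕ → ℝ) (f : ℝ → ENNReal) (p n : ℕ) (hpn : p ≤ n)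
    (hm : ∀ i, p ≤ i → i < n → ξ i ≤ ξ (i+1)) : ξ p ≤ ξ n ∧
    ∑ j ∈ Finset.Ico p n, ∫⁻ t in Ioc (ξ j) (ξ (j+1)), f t = ∫⁻ t in Ioc (ξ p) (ξ n), f t := by
  induction n, hpn using Nat.le_induction with
  | base => simp
  | succ n hn ih =>
    obtain ⟨h1, h2⟩ := ih (fun i hi hi' => hm i hi (by omega))
    have h3 := hm n hn (by omega)
    refine ⟨h1.trans h3, ?_⟩
    rw [Finset.sum_Ico_succ_top hn, h2, ← lintegral_union measurableSet_Ioc,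
      Ioc_union_Ioc_eq_Ioc h1 h3]
    exact Ioc_disjoint_Ioc_of_le le_rfl

/-- the kernel -/
noncomputable def gK (s t : ℝ) : ENNReal := ENNReal.ofReal (1 / (s - t)^2)

lemma gK_symm (s t : ℝ) : gK s t = gK t s := by
  unfold gK; rw [show (s - t)^2 = (t - s)^2 by ring]

lemma gK_meas : Measurable (Function.uncurry gK) := by
  unfold gK Function.uncurry; fun_prop

/-- pair integral -/
noncomputable def gI (A B : Set ℝ) : ENNReal := ∫⁻ s in A, ∫⁻ t in B, gK s t

lemma gI_symm (A B : Set ℝ) : gI A B = gI B A := by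
  unfold gI
  rw [lintegral_lintegral_swap gK_meas.aemeasurable]
  simp only [gK_symm]

/-- the Gagliardo integrand -/
noncomputable def gF (u : ℝ → ℝ) (s t : ℝ) : ENNReal := ENNReal.ofReal ((u s - u t)^2 / (s - t)^2)

lemma gF_meas {u : ℝ → ℝ} (hu : Continuous u) : Measurable (Function.uncurry (gF u)) := by
  have := hu.measurable
  unfold gF Function.uncurry; fun_prop

/-- pair contribution -/
noncomputable def gT (u : ℝ → ℝ) (A B : Set ℝ) : ENNReal := ∫⁻ s in A, ∫⁻ t in B, gF u s t

lemma gT_symm {u : ℝ → ℝ} (hu : Continuous u) (A B : Set ℝ) : gT u A B = gT u B A := by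
  unfold gT
  rw [lintegral_lintegral_swap (gF_meas hu).aemeasurable]
  have : ∀ s t, gF u s t = gF u t s := by
    intro s t
    unfold gF; rw [show (s - t)^2 = (t - s)^2 by ring, show (u s - u t)^2 = (u t - u s)^2 by ring]
  simp only [this]

lemma gT_far {u : ℝ → ℝ} {A B : Set ℝ} (hA : MeasurableSet A) (hB : MeasurableSet B) {M N : ℝ}
    (hM : ∀ s ∈ A, |u s| ≤ M) (hN : ∀ s ∈ B, |u s| ≤ N) :
    gT u A B ≤ (ENNReal.ofReal (M^2) + ENNReal.ofReal (N^2)) * (2 * gI A B) := by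
  have e : (ENNReal.ofReal (M^2) + ENNReal.ofReal (N^2)) * (2 * gI A B)
      = ∫⁻ s in A, ∫⁻ t in B, ENNReal.ofReal (2 * (M^2 + N^2)) * gK s t := by
    simp only [lintegral_const_mul' _ _ ENNReal.ofReal_ne_top]
    rw [← ENNReal.ofReal_add (by positivity) (by positivity), ENNReal.ofReal_mul (by norm_num)]
    unfold gI
    rw [ENNReal.ofReal_ofNat]; ring
  rw [e]
  unfold gT
  refine setLIntegral_mono' hA fun s hs => setLIntegral_mono' hB fun t ht => ?_
  unfold gF gK
  rw [← ENNReal.ofReal_mul (by positivity)]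
  apply ENNReal.ofReal_le_ofReal
  rw [mul_one_div]
  apply div_le_div_of_nonneg_right _ (by positivity)
  have h1 := sq_le_sq' (neg_le_of_abs_le (hM s hs)) (le_of_abs_le (hM s hs))
  have h2 := sq_le_sq' (neg_le_of_abs_le (hN t ht)) (le_of_abs_le (hN t ht))
  nlinarith [sq_nonneg (u s + u t)]

lemma gT_diag {u : ℝ → ℝ} {x y c M : ℝ} (hxy : x < y)
    (hL : ∀ s ∈ Icc x y, ∀ t ∈ Icc x y, |u s - u t| ≤ c * M / (y - x) * |s - t|) :
    gT u (Ioc x y) (Ioc x y) ≤ ENNReal.ofReal (c^2 * M^2) := by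
  have hh : 0 < y - x := sub_pos.mpr hxy
  calc gT u (Ioc x y) (Ioc x y)
      ≤ ∫⁻ s in Ioc x y, ∫⁻ t in Ioc x y, ENNReal.ofReal ((c * M / (y-x))^2) := by
        unfold gT
        refine setLIntegral_mono' measurableSet_Ioc fun s hs => setLIntegral_mono' measurableSet_Ioc fun t ht => ?_
        unfold gF
        apply ENNReal.ofReal_le_ofReal
        have := hL s (Ioc_subset_Icc_self hs) t (Ioc_subset_Icc_self ht)
        have h2 := pow_le_pow_left₀ (abs_nonneg _) this 2
        rw [sq_abs, mul_pow, sq_abs] at h2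
        exact div_le_of_le_mul₀ (by positivity) (by positivity) h2
    _ = _ := by
        simp only [lintegral_const, Measure.restrict_apply_univ, Real.volume_Ioc]
        rw [← ENNReal.ofReal_mul (by positivity), ← ENNReal.ofReal_mul (by positivity)]
        congr 1; field_simp

lemma aux_right {x z y L : ℝ} (hxz : x < z) :
    ∫⁻ s in Ioc x z, ∫⁻ t in Ioc z y, ENNReal.ofReal (2 * L^2 * (z - s)^2) * gK s t
      ≤ ENNReal.ofReal (2 * L^2 * (z - x)^2) := by
  calc _ ≤ ∫⁻ s in Ioc x z, ENNReal.ofReal (2 * L^2 * (z - x)) := by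
        refine setLIntegral_mono' measurableSet_Ioc fun s hs => ?_
        rw [lintegral_const_mul' _ _ ENNReal.ofReal_ne_top]
        rcases hs.2.eq_or_lt with h | h
        · subst h; simp
        · have h1 : ∫⁻ t in Ioc z y, gK s t ≤ ENNReal.ofReal (1 / (z - s)) :=
            (lintegral_mono_set Ioc_subset_Ioi_self).trans (lint_right h)
          refine (mul_le_mul_right h1 _).trans ?_
          rw [← ENNReal.ofReal_mul (by positivity)]
          apply ENNReal.ofReal_le_ofReal
          have : 0 < z - s := by linarith
          rw [show 2 * L^2 * (z - s)^2 * (1 / (z - s)) = 2 * L^2 * (z - s) by field_simp]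
          have := hs.1
          gcongr
    _ = _ := by
        simp only [lintegral_const, Measure.restrict_apply_univ, Real.volume_Ioc]
        have : 0 < z - x := by linarith
        rw [← ENNReal.ofReal_mul (by positivity)]
        congr 1; ring

lemma aux_left {x z y L : ℝ} (hzy : z < y) :
    ∫⁻ t in Ioc z y, ∫⁻ s in Ioc x z, ENNReal.ofReal (2 * L^2 * (t - z)^2) * gK t s
      ≤ ENNReal.ofReal (2 * L^2 * (y - z)^2) := by
  calc _ ≤ ∫⁻ s in Ioc z y, ENNReal.ofReal (2 * L^2 * (y - z)) := by
        refine setLIntegral_mono' measurableSet_Ioc fun s hs => ?_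
        rw [lintegral_const_mul' _ _ ENNReal.ofReal_ne_top]
        have h1 : ∫⁻ t in Ioc x z, gK s t ≤ ENNReal.ofReal (1 / (s - z)) := by
          rw [← restrict_Ioo_eq_restrict_Ioc]
          exact (lintegral_mono_set Ioo_subset_Iio_self).trans (lint_left hs.1)
        refine (mul_le_mul_right h1 _).trans ?_
        rw [← ENNReal.ofReal_mul (by positivity)]
        apply ENNReal.ofReal_le_ofReal
        have : 0 < s - z := by linarith [hs.1]
        rw [show 2 * L^2 * (s - z)^2 * (1 / (s - z)) = 2 * L^2 * (s - z) by field_simp]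
        have := hs.2
        gcongr
    _ = _ := by
        simp only [lintegral_const, Measure.restrict_apply_univ, Real.volume_Ioc]
        have : 0 < y - z := by linarith
        rw [← ENNReal.ofReal_mul (by positivity)]
        congr 1; ring

lemma gT_adj {u : ℝ → ℝ} {x z y c M N : ℝ} (hxz : x < z) (hzy : z < y)
    (hL : ∀ s ∈ Icc x z, ∀ t ∈ Icc x z, |u s - u t| ≤ c * M / (z - x) * |s - t|)
    (hL' : ∀ s ∈ Icc z y, ∀ t ∈ Icc z y, |u s - u t| ≤ c * N / (y - z) * |s - t|) :
    gT u (Ioc x z) (Ioc z y) ≤ ENNReal.ofReal (2 * c^2 * M^2) + ENNReal.ofReal (2 * c^2 * N^2) := by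
  have h1 : 0 < z - x := by linarith
  have h2 : 0 < y - z := by linarith
  set L := c * M / (z - x) with hLd
  set L' := c * N / (y - z) with hLd'
  have e1 : 2 * c^2 * M^2 = 2 * L^2 * (z - x)^2 := by rw [hLd]; field_simp
  have e2 : 2 * c^2 * N^2 = 2 * L'^2 * (y - z)^2 := by rw [hLd']; field_simp
  have m1 : Measurable (Function.uncurry fun s t => ENNReal.ofReal (2 * L^2 * (z - s)^2) * gK s t) := by
    unfold gK Function.uncurry; fun_prop
  have m2 : Measurable (Function.uncurry fun s t => ENNReal.ofReal (2 * L'^2 * (t - z)^2) * gK s t) := by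
    unfold gK Function.uncurry; fun_prop
  calc gT u (Ioc x z) (Ioc z y) ≤ ∫⁻ s in Ioc x z, ∫⁻ t in Ioc z y,
        (ENNReal.ofReal (2 * L^2 * (z - s)^2) * gK s t + ENNReal.ofReal (2 * L'^2 * (t - z)^2) * gK s t) := by
        unfold gT
        refine setLIntegral_mono' measurableSet_Ioc fun s hs => setLIntegral_mono' measurableSet_Ioc fun t ht => ?_
        unfold gF gK
        rw [← ENNReal.ofReal_mul (by positivity), ← ENNReal.ofReal_mul (by positivity),
          ← ENNReal.ofReal_add (by positivity) (by positivity)]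
        apply ENNReal.ofReal_le_ofReal
        rw [mul_one_div, mul_one_div, ← add_div]
        apply div_le_div_of_nonneg_right _ (by positivity)
        have a1 := pow_le_pow_left₀ (abs_nonneg _) (hL s (Ioc_subset_Icc_self hs) z ⟨hxz.le, le_rfl⟩) 2
        have a2 := pow_le_pow_left₀ (abs_nonneg _) (hL' t (Ioc_subset_Icc_self ht) z ⟨le_rfl, hzy.le⟩) 2
        rw [sq_abs, mul_pow, sq_abs] at a1 a2
        nlinarith [sq_nonneg ((u s - u z) + (u t - u z))]
    _ = (∫⁻ s in Ioc x z, ∫⁻ t in Ioc z y, ENNReal.ofReal (2 * L^2 * (z - s)^2) * gK s t) +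
        ∫⁻ s in Ioc x z, ∫⁻ t in Ioc z y, ENNReal.ofReal (2 * L'^2 * (t - z)^2) * gK s t := by
        have m3 : Measurable fun s => ∫⁻ t in Ioc z y, ENNReal.ofReal (2 * L^2 * (z - s)^2) * gK s t :=
          m1.lintegral_prod_right'
        rw [← lintegral_add_left m3]
        refine lintegral_congr fun s => ?_
        rw [lintegral_add_left (m1.of_uncurry_left)]
    _ ≤ _ := by
        rw [e1, e2]
        refine add_le_add (aux_right hxz) ?_
        rw [lintegral_lintegral_swap m2.aemeasurable]
        simp only [fun s t => gK_symm s t]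
        simpa only [gK_symm] using aux_left (x := x) (L := L') hzy

lemma gI_far_right {x y z w : ℝ} (h : x < y) (h2 : y < z) {R : ℝ} (hR : (y - x) / (z - y) ≤ R) :
    gI (Ioc x y) (Ioc z w) ≤ ENNReal.ofReal (Real.log (1 + R)) := by
  unfold gI
  have h3 : 0 < (y - x) / (z - y) := div_pos (by linarith) (by linarith)
  refine (setLIntegral_mono' measurableSet_Ioc fun s hs => ?_).trans ((lint_log_right h h2).trans ?_)
  · exact (lintegral_mono_set Ioc_subset_Ioi_self).trans (lint_right (by linarith [hs.2]))
  · exact ENNReal.ofReal_le_ofReal (Real.log_le_log (by linarith) (by linarith))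

lemma gI_far_left {x y z w : ℝ} (h : x < y) (h2 : z < x) {R : ℝ} (hR : (y - x) / (x - z) ≤ R) :
    gI (Ioc x y) (Ioc w z) ≤ ENNReal.ofReal (Real.log (1 + R)) := by
  unfold gI
  have h3 : 0 < (y - x) / (x - z) := div_pos (by linarith) (by linarith)
  refine (setLIntegral_mono' measurableSet_Ioc fun s hs => ?_).trans ((lint_log_left h h2).trans ?_)
  · rw [← restrict_Ioo_eq_restrict_Ioc]
    exact (lintegral_mono_set Ioo_subset_Iio_self).trans (lint_left (by linarith [hs.1]))
  · exact ENNReal.ofReal_le_ofReal (Real.log_le_log (by linarith) (by linarith))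

lemma gI_sum (ξ : ℕ → ℝ) (A : Set ℝ) (p n : ℕ) (hpn : p ≤ n)
    (hm : ∀ i, p ≤ i → i < n → ξ i ≤ ξ (i+1)) :
    ∑ j ∈ Finset.Ico p n, gI A (Ioc (ξ j) (ξ (j+1))) = gI A (Ioc (ξ p) (ξ n)) := by
  unfold gI
  rw [← lintegral_finsetSum]
  · exact lintegral_congr fun s => (sum_lint ξ _ p n hpn hm).2
  · intro j _
    exact gK_meas.lintegral_prod_right'

lemma gT_sum {u : ℝ → ℝ} (hu : Continuous u) (ξ : ℕ → ℝ) (A : Set ℝ) (p n : ℕ) (hpn : p ≤ n)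
    (hm : ∀ i, p ≤ i → i < n → ξ i ≤ ξ (i+1)) :
    ∑ j ∈ Finset.Ico p n, gT u A (Ioc (ξ j) (ξ (j+1))) = gT u A (Ioc (ξ p) (ξ n)) := by
  unfold gT
  rw [← lintegral_finsetSum]
  · exact lintegral_congr fun s => (sum_lint ξ _ p n hpn hm).2
  · intro j _
    exact (gF_meas hu).lintegral_prod_right'

open Classical in
/-- pair weights -/
noncomputable def gW (ξ : ℕ → ℝ) (a : ENNReal) (i j : ℕ) : ENNReal :=
  if j ≤ i + 1 ∧ i ≤ j + 1 then a else 2 * gI (Ioc (ξ i) (ξ (i+1))) (Ioc (ξ j) (ξ (j+1)))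

lemma gW_symm (ξ : ℕ → ℝ) (a : ENNReal) (i j : ℕ) : gW ξ a i j = gW ξ a j i := by
  unfold gW
  rw [gI_symm]
  simp only [and_comm]

lemma gW_sum (ξ : ℕ → ℝ) (a : ENNReal) (r : ℕ) (hm : ∀ i < r, ξ i < ξ (i+1)) (R : ℝ)
    (hR : ∀ i < r, ∀ j < r, (ξ (i+1) - ξ i) / (ξ (j+1) - ξ j) ≤ R) (i : ℕ) (hi : i < r) :
    ∑ j ∈ Finset.range r, gW ξ a i j ≤ 3 * a + 4 * ENNReal.ofReal (Real.log (1 + R)) := by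
  classical
  set g : ℕ → ENNReal := fun j => gI (Ioc (ξ i) (ξ (i+1))) (Ioc (ξ j) (ξ (j+1))) with hg
  have h1 : ∀ j ∈ Finset.range r, gW ξ a i j ≤ ((if j = i then a else 0) + (if j = i + 1 then a else 0) +
      (if j = i - 1 then a else 0)) + 2 * ((if i + 2 ≤ j then g j else 0) + (if j + 2 ≤ i then g j else 0)) := by
    intro j _
    unfold gW
    split_ifs with h <;> first | omega | simp [hg]
  refine (Finset.sum_le_sum h1).trans ?_
  rw [Finset.sum_add_distrib, ← Finset.mul_sum]
  have hA : ∀ k, ∑ j ∈ Finset.range r, (if j = k then a else 0) ≤ a := by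
    intro k
    rw [Finset.sum_ite_eq']
    split_ifs <;> simp
  have hB : ∑ j ∈ Finset.range r, (if i + 2 ≤ j then g j else 0) ≤ ENNReal.ofReal (Real.log (1 + R)) := by
    rw [← Finset.sum_filter]
    have : (Finset.range r).filter (fun j => i + 2 ≤ j) = Finset.Ico (i+2) r := by
      ext; simp; omega
    rw [this]
    rcases le_or_gt (i+2) r with h | h
    · rw [hg, gI_sum ξ _ _ _ h (fun j _ hj => (hm j hj).le)]
      exact gI_far_right (hm i hi) (hm (i+1) (by omega)) (hR i hi (i+1) (by omega))
    · rw [Finset.Ico_eq_empty (by omega)]; simp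
  have hC : ∑ j ∈ Finset.range r, (if j + 2 ≤ i then g j else 0) ≤ ENNReal.ofReal (Real.log (1 + R)) := by
    rw [← Finset.sum_filter]
    have : (Finset.range r).filter (fun j => j + 2 ≤ i) = Finset.Ico 0 (i-1) := by
      ext; simp; omega
    rw [this]
    rcases Nat.eq_zero_or_pos i with h | h
    · subst h; simp
    · rw [hg, gI_sum ξ _ _ _ (Nat.zero_le _) (fun j _ hj => (hm j (by omega)).le)]
      obtain ⟨p, rfl⟩ : ∃ p, i = p + 1 := ⟨i - 1, by omega⟩
      exact gI_far_left (hm (p+1) hi) (hm p (by omega)) (hR (p+1) hi p (by omega))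
  simp only [Finset.sum_add_distrib]
  calc _ ≤ (a + a + a) + 2 * (ENNReal.ofReal (Real.log (1 + R)) + ENNReal.ofReal (Real.log (1 + R))) := by
        gcongr
        · exact hA i
        · exact hA (i+1)
        · exact hA (i-1)
    _ = _ := by ring

lemma main_bound {u : ℝ → ℝ} (hu : Continuous u) (ξ : ℕ → ℝ) (r : ℕ) (hm : ∀ i < r, ξ i < ξ (i+1)) (R : ℝ)
    (hR : ∀ i < r, ∀ j < r, (ξ (i+1) - ξ i) / (ξ (j+1) - ξ j) ≤ R) (M : ℕ → ℝ) (c : ℝ)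
    (hM : ∀ i < r, ∀ s ∈ Icc (ξ i) (ξ (i+1)), |u s| ≤ M i)
    (hL : ∀ i < r, ∀ s ∈ Icc (ξ i) (ξ (i+1)), ∀ t ∈ Icc (ξ i) (ξ (i+1)),
      |u s - u t| ≤ c * M i / (ξ (i+1) - ξ i) * |s - t|) :
    gT u (Ioc (ξ 0) (ξ r)) (Ioc (ξ 0) (ξ r)) ≤
      2 * (3 * ENNReal.ofReal (2 * c^2) + 4 * ENNReal.ofReal (Real.log (1 + R))) *
        ∑ i ∈ Finset.range r, ENNReal.ofReal (M i ^ 2) := by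
  set E : ℕ → Set ℝ := fun i => Ioc (ξ i) (ξ (i+1)) with hE
  set m : ℕ → ENNReal := fun i => ENNReal.ofReal (M i ^ 2) with hmd
  set a := ENNReal.ofReal (2 * c^2) with ha
  have hadj : ∀ i, i + 1 < r → gT u (E i) (E (i+1)) ≤ (m i + m (i+1)) * a := by
    intro i hi
    refine (gT_adj (hm i (by omega)) (hm (i+1) hi) (hL i (by omega)) (hL (i+1) hi)).trans ?_
    rw [ENNReal.ofReal_mul (p := 2 * c^2) (q := M i ^ 2) (by positivity),
      ENNReal.ofReal_mul (p := 2 * c^2) (q := M (i+1) ^ 2) (by positivity), ← mul_add, mul_comm]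
  have hpair : ∀ i < r, ∀ j < r, gT u (E i) (E j) ≤ (m i + m j) * gW ξ a i j := by
    intro i hi j hj
    unfold gW
    split_ifs with h
    · have : j = i ∨ j = i + 1 ∨ i = j + 1 := by omega
      rcases this with rfl | rfl | rfl
      · refine (gT_diag (hm j hi) (hL j hi)).trans ?_
        simp only [hmd, ha]
        rw [← ENNReal.ofReal_add (by positivity) (by positivity), ← ENNReal.ofReal_mul (by positivity)]
        apply ENNReal.ofReal_le_ofReal
        nlinarith [mul_nonneg (sq_nonneg c) (sq_nonneg (M j))]
      · exact hadj i hj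
      · rw [gT_symm hu, add_comm (m (j+1)) (m j)]
        exact hadj j hi
    · exact gT_far measurableSet_Ioc measurableSet_Ioc
        (fun s hs => hM i hi s (Ioc_subset_Icc_self hs)) (fun s hs => hM j hj s (Ioc_subset_Icc_self hs))
  have hmm : ∀ i, 0 ≤ i → i < r → ξ i ≤ ξ (i+1) := fun i _ hi => (hm i hi).le
  have htot : gT u (Ioc (ξ 0) (ξ r)) (Ioc (ξ 0) (ξ r)) =
      ∑ i ∈ Finset.range r, ∑ j ∈ Finset.range r, gT u (E i) (E j) := by
    rw [← gT_sum hu ξ _ 0 r (Nat.zero_le _) hmm, Finset.range_eq_Ico, Finset.sum_comm]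
    refine Finset.sum_congr rfl fun j _ => ?_
    rw [gT_symm hu, ← gT_sum hu ξ _ 0 r (Nat.zero_le _) hmm]
    exact Finset.sum_congr rfl fun i _ => gT_symm hu _ _
  rw [htot]
  set D := 3 * a + 4 * ENNReal.ofReal (Real.log (1 + R)) with hD
  have hWs := gW_sum ξ a r hm R hR
  calc ∑ i ∈ Finset.range r, ∑ j ∈ Finset.range r, gT u (E i) (E j)
      ≤ ∑ i ∈ Finset.range r, ∑ j ∈ Finset.range r, (m i * gW ξ a i j + m j * gW ξ a i j) := by
        refine Finset.sum_le_sum fun i hi => Finset.sum_le_sum fun j hj => ?_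
        rw [← add_mul]
        exact hpair i (Finset.mem_range.mp hi) j (Finset.mem_range.mp hj)
    _ = (∑ i ∈ Finset.range r, m i * ∑ j ∈ Finset.range r, gW ξ a i j) +
        ∑ i ∈ Finset.range r, m i * ∑ j ∈ Finset.range r, gW ξ a i j := by
        simp only [Finset.sum_add_distrib, Finset.mul_sum]
        congr 1
        rw [Finset.sum_comm]
        refine Finset.sum_congr rfl fun i _ => Finset.sum_congr rfl fun j _ => ?_
        rw [gW_symm]
    _ ≤ (∑ i ∈ Finset.range r, m i * D) + ∑ i ∈ Finset.range r, m i * D := by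
        have : ∑ i ∈ Finset.range r, m i * ∑ j ∈ Finset.range r, gW ξ a i j ≤ ∑ i ∈ Finset.range r, m i * D := by
          refine Finset.sum_le_sum fun i hi => ?_
          gcongr
          exact hWs i (Finset.mem_range.mp hi)
        exact add_le_add this this
    _ = _ := by
        rw [← Finset.sum_mul]; ring

/-- For every `mBar ∈ ℕ`, `cBar ≥ 1`, `k ∈ ℕ` there is `C > 0` such that for
every compact interval `[a,b]`, every piecewise quasi-uniform mesh (with parameters
`(mBar, cBar)`) of `[a,b]`, and every continuous piecewise polynomial `v` of degree `≤ k`,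
the squared Gagliardo `H^{1/2}` seminorm of `v` is bounded by
`C · log(1 + R) · Σ_i (sup_{e_i} |v|)²`, where `R` is the ratio between the largest
and the smallest element length of the mesh. -/
theorem gagliardo_bound_log_times_local_sup (mBar : ℕ) (cBar : ℝ) (hc : 1 ≤ cBar) (k : ℕ) :
    ∃ C : ℝ, 0 < C ∧
      ∀ (a b : ℝ) (_hab : a < b) (r : ℕ) (hr : 0 < r) (ξ : ℕ → ℝ)
        (_h0 : ξ 0 = a) (_hr' : ξ r = b) (_hmono : ∀ i < r, ξ i < ξ (i + 1))
        -- `𝒯` is piecewise quasi-uniform with parameters `(mBar, cBar)`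
        (_hpqu : ∃ m ≤ mBar, ∃ β : ℕ → ℕ, β 0 = 0 ∧ β m = r ∧
          (∀ l < m, β l < β (l + 1)) ∧
          ∀ l < m, ∀ i, β l ≤ i → i < β (l + 1) → ∀ j, β l ≤ j → j < β (l + 1) →
            ξ (i + 1) - ξ i ≤ cBar * (ξ (j + 1) - ξ j))
        (v : ℝ → ℝ) (_hcont : ContinuousOn v (Icc a b))
        -- `v ∈ 𝕊_k(𝒯)`
        (_hpoly : ∀ i < r, ∃ p : Polynomial ℝ, p.natDegree ≤ k ∧
          ∀ t ∈ Ioo (ξ i) (ξ (i + 1)), v t = p.eval t),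
        (∫ s in Ioo a b, ∫ t in Ioo a b, (v s - v t) ^ 2 / (s - t) ^ 2) ≤
          C * Real.log (1 +
              ((Finset.range r).sup' (Finset.nonempty_range_iff.mpr hr.ne')
                  fun i => ξ (i + 1) - ξ i) /
              ((Finset.range r).inf' (Finset.nonempty_range_iff.mpr hr.ne')
                  fun i => ξ (i + 1) - ξ i)) *
            ∑ i ∈ Finset.range r,
              (sSup ((fun t => |v t|) '' Ioo (ξ i) (ξ (i + 1)))) ^ 2 := by
  clear hc
  obtain ⟨c, hc0, hc⟩ := markov k
  have hlog2 : 0 < Real.log 2 := Real.log_pos (by norm_num)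
  refine ⟨12 * c^2 / Real.log 2 + 8, by positivity, ?_⟩
  intro a b hab r hr ξ h0 hr' hmono _ v hcont hpoly
  set Hs := (Finset.range r).sup' (Finset.nonempty_range_iff.mpr hr.ne') fun i => ξ (i + 1) - ξ i with hHs
  set Hi := (Finset.range r).inf' (Finset.nonempty_range_iff.mpr hr.ne') fun i => ξ (i + 1) - ξ i with hHi
  have hle_s : ∀ i < r, ξ (i+1) - ξ i ≤ Hs := fun i hi =>
    Finset.le_sup' (fun i => ξ (i + 1) - ξ i) (Finset.mem_range.mpr hi)
  have hle_i : ∀ i < r, Hi ≤ ξ (i+1) - ξ i := fun i hi =>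
    Finset.inf'_le (fun i => ξ (i + 1) - ξ i) (Finset.mem_range.mpr hi)
  have hHi0 : 0 < Hi := by
    rw [hHi, Finset.lt_inf'_iff]
    intro i hi
    exact sub_pos.mpr (hmono i (Finset.mem_range.mp hi))
  have hR : ∀ i < r, ∀ j < r, (ξ (i+1) - ξ i) / (ξ (j+1) - ξ j) ≤ Hs / Hi := fun i hi j hj =>
    div_le_div₀ ((sub_pos.mpr (hmono i hi)).le.trans (hle_s i hi)) (hle_s i hi) hHi0 (hle_i j hj)
  have hR1 : 1 ≤ Hs / Hi := by
    have := hR 0 hr 0 hr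
    rwa [div_self (sub_pos.mpr (hmono 0 hr)).ne'] at this
  set R := Hs / Hi with hRd
  set M : ℕ → ℝ := fun i => sSup ((fun t => |v t|) '' Ioo (ξ i) (ξ (i + 1))) with hMd
  -- subintervals lie in `[a,b]`
  have hmem : ∀ i < r, a ≤ ξ i ∧ ξ (i+1) ≤ b := by
    intro i hi
    constructor
    · rw [← h0]; exact (sum_lint ξ 0 0 i (Nat.zero_le _) (fun j _ hj => (hmono j (by omega)).le)).1
    · rw [← hr']; exact (sum_lint ξ 0 (i+1) r hi (fun j _ hj => (hmono j (by omega)).le)).1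
  -- continuous extension
  set u : ℝ → ℝ := IccExtend hab.le ((Icc a b).domRestrict v) with hud
  have hu : Continuous u := (continuousOn_iff_continuous_domRestrict.mp hcont).Icc_extend'
  have huv : ∀ t ∈ Icc a b, u t = v t := fun t ht => by
    rw [hud, IccExtend_of_mem _ _ ht]; rfl
  have hsub : ∀ i < r, Ioo (ξ i) (ξ (i+1)) ⊆ Icc a b := fun i hi t ht =>
    ⟨(hmem i hi).1.trans ht.1.le, ht.2.le.trans (hmem i hi).2⟩
  have hbdd : ∀ i < r, BddAbove ((fun t => |v t|) '' Ioo (ξ i) (ξ (i + 1))) := fun i hi =>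
    ((isCompact_Icc.image_of_continuousOn hcont.abs).bddAbove).mono (image_mono (hsub i hi))
  have hMo : ∀ i < r, ∀ t ∈ Ioo (ξ i) (ξ (i+1)), |v t| ≤ M i := fun i hi t ht =>
    le_csSup (hbdd i hi) (mem_image_of_mem _ ht)
  have hcl : ∀ i < r, closure (Ioo (ξ i) (ξ (i+1))) = Icc (ξ i) (ξ (i+1)) := fun i hi =>
    closure_Ioo (hmono i hi).ne
  have hM : ∀ i < r, ∀ s ∈ Icc (ξ i) (ξ (i+1)), |u s| ≤ M i := by
    intro i hi s hs
    rw [← hcl i hi] at hs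
    exact le_on_closure (f := fun s => |u s|) (g := fun _ => M i)
      (fun x hx => by rw [huv x (hsub i hi hx)]; exact hMo i hi x hx)
      hu.abs.continuousOn continuousOn_const hs
  have hL : ∀ i < r, ∀ s ∈ Icc (ξ i) (ξ (i+1)), ∀ t ∈ Icc (ξ i) (ξ (i+1)),
      |u s - u t| ≤ c * M i / (ξ (i+1) - ξ i) * |s - t| := by
    intro i hi
    obtain ⟨p, hp, hpv⟩ := hpoly i hi
    have hpu : EqOn u (fun t => p.eval t) (Icc (ξ i) (ξ (i+1))) := by
      rw [← hcl i hi]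
      apply EqOn.closure _ hu p.continuous
      intro t ht
      rw [huv t (hsub i hi ht), hpv t ht]
    intro s hs t ht
    rw [hpu hs, hpu ht]
    exact hc p hp (M i) _ _ (hmono i hi) (fun t ht => by rw [← hpv t ht]; exact hMo i hi t ht) s hs t ht
  have key := main_bound hu ξ r hmono R hR M c hM hL
  rw [h0, hr'] at key
  have hlog : Real.log 2 ≤ Real.log (1 + R) := Real.log_le_log (by norm_num) (by linarith)
  have hS : 0 ≤ ∑ i ∈ Finset.range r, M i ^ 2 := Finset.sum_nonneg fun i _ => sq_nonneg _
  have hle : ENNReal.ofReal (∫ s in Ioo a b, ∫ t in Ioo a b, (v s - v t) ^ 2 / (s - t) ^ 2) ≤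
      gT u (Ioc a b) (Ioc a b) := by
    refine (Real.ofReal_le_enorm _).trans ((enorm_integral_le_lintegral_enorm _).trans ?_)
    unfold gT
    simp only [← restrict_Ioo_eq_restrict_Ioc]
    refine setLIntegral_mono' measurableSet_Ioo fun s hs => (enorm_integral_le_lintegral_enorm _).trans ?_
    refine setLIntegral_mono' measurableSet_Ioo fun t ht => ?_
    unfold gF
    rw [huv s (Ioo_subset_Icc_self hs), huv t (Ioo_subset_Icc_self ht), Real.enorm_of_nonneg (by positivity)]
  have e : 2 * (3 * ENNReal.ofReal (2 * c^2) + 4 * ENNReal.ofReal (Real.log (1 + R))) *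
        ∑ i ∈ Finset.range r, ENNReal.ofReal (M i ^ 2) =
      ENNReal.ofReal (2 * (3 * (2 * c^2) + 4 * Real.log (1 + R)) * ∑ i ∈ Finset.range r, M i ^ 2) := by
    have hl : 0 ≤ Real.log (1 + R) := hlog2.le.trans hlog
    rw [ENNReal.ofReal_mul (q := ∑ i ∈ Finset.range r, M i ^ 2) (by positivity),
      ENNReal.ofReal_mul (p := 2) (q := 3 * (2 * c^2) + 4 * Real.log (1 + R)) (by positivity),
      ENNReal.ofReal_add (by positivity) (by positivity),
      ENNReal.ofReal_mul (p := 3) (by positivity), ENNReal.ofReal_mul (p := 4) (by positivity),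
      ENNReal.ofReal_sum_of_nonneg (fun i _ => sq_nonneg _)]
    simp only [ENNReal.ofReal_ofNat]
  rw [e] at key
  have hl : 0 ≤ Real.log (1 + R) := hlog2.le.trans hlog
  have fin := (ENNReal.ofReal_le_ofReal_iff (by positivity)).mp (hle.trans key)
  refine fin.trans (mul_le_mul_of_nonneg_right ?_ hS)
  have h12 : 12 * c^2 ≤ 12 * c^2 / Real.log 2 * Real.log (1 + R) := by
    rw [div_mul_eq_mul_div, le_div_iff₀ hlog2]
    gcongr
  nlinarith
end

section
/- For every m̄ ∈ ℕ, every c̄ ≥ 1 and every k ∈ ℕ there exists a constant C > 0 (depending only on m̄, c̄ and k) with the following property: for every compact interval [a,b], every mesh 𝒯 of [a,b] that is piecewise quasi-uniform with parameters (m̄, c̄), and every v ∈ 𝕊_k(𝒯), one has ∫_a^b ∫_a^b (v(x) − v(y))²/(x − y)² dx dy ≤ C · ( Σ_{i=1}^{r} (sup_{x ∈ e_i} |v(x)|)² + log(1 + R(𝒯)) · (sup_{x ∈ [a,b]} |v(x)|)² ), where R(𝒯) is the ratio of the largest to the smallest element length of 𝒯; that is, the logarithmic factor is needed only in front of the global supremum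 norm. -/
open MeasureTheory Set

/-- inverse inequality on polynomials -/
lemma gg_inverse (k : ℕ) : ∃ K : ℝ, 0 ≤ K ∧ ∀ (p : Polynomial ℝ), p.natDegree ≤ k →
    ∀ (α β M : ℝ), α < β → (∀ t ∈ Ioo α β, |p.eval t| ≤ M) →
    ∀ s ∈ Icc α β, ∀ t ∈ Icc α β, |p.eval s - p.eval t| ≤ K * M / (β - α) * |s - t| := by
  classical
  let x : ℕ → ℝ := fun j => ((j : ℝ) + 1) / ((k : ℝ) + 2)
  have hk2 : (0:ℝ) < (k : ℝ) + 2 := by positivity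
  have hinj : Set.InjOn x (Finset.range (k + 1)) := by
    intro i _ j _ hij
    have : ((i : ℝ) + 1) = (j : ℝ) + 1 := by
      have := hij
      simp only [x] at this
      field_simp at this
      linarith
    exact_mod_cast (add_right_cancel this)
  have hlip : ∀ q : Polynomial ℝ, ∃ L : ℝ, 0 ≤ L ∧ ∀ s ∈ Icc (0:ℝ) 1, ∀ t ∈ Icc (0:ℝ) 1,
      |q.eval s - q.eval t| ≤ L * |s - t| := by
    intro q
    obtain ⟨L, hL⟩ := (isCompact_Icc (a := (0:ℝ)) (b := 1)).exists_bound_of_continuousOn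
      (f := fun s => q.derivative.eval s) (by fun_prop)
    refine ⟨L, (norm_nonneg _).trans (hL 0 (by simp)), fun s hs t ht => ?_⟩
    have := (convex_Icc (0:ℝ) 1).norm_image_sub_le_of_norm_hasDerivWithin_le
      (f := fun s => q.eval s) (f' := fun s => q.derivative.eval s)
      (fun z _ => (q.hasDerivAt z).hasDerivWithinAt) hL ht hs
    simpa [Real.norm_eq_abs] using this
  choose L hL0 hL using hlip
  refine ⟨∑ j ∈ Finset.range (k + 1), L (Lagrange.basis (Finset.range (k+1)) x j),
    Finset.sum_nonneg (fun _ _ => hL0 _), ?_⟩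
  intro p hp α β M hαβ hM s hs t ht
  have hd : 0 < β - α := by linarith
  let q : Polynomial ℝ := p.comp (Polynomial.C α + Polynomial.C (β - α) * Polynomial.X)
  have hqe : ∀ u, q.eval u = p.eval (α + (β - α) * u) := by
    intro u; simp [q, Polynomial.eval_comp]
  have hqd : q.degree < (Finset.range (k+1)).card := by
    rw [Finset.card_range]
    refine (Polynomial.degree_le_natDegree).trans_lt ?_
    have h1 : q.natDegree ≤ k := by
      refine (Polynomial.natDegree_comp_le).trans ?_
      have h2 : (Polynomial.C α + Polynomial.C (β - α) * Polynomial.X : Polynomial ℝ).natDegree ≤ 1 := by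
        compute_degree
      nlinarith
    exact_mod_cast Nat.lt_succ_of_le h1
  have hinterp := Lagrange.eq_interpolate hinj hqd
  have hqM : ∀ j ∈ Finset.range (k+1), |q.eval (x j)| ≤ M := by
    intro j hj
    rw [hqe]
    apply hM
    have hx0 : 0 < x j := by simp only [x]; positivity
    have hx1 : x j < 1 := by
      simp only [x]
      rw [div_lt_one hk2]
      have : (j:ℝ) < (k:ℝ) + 1 := by exact_mod_cast Finset.mem_range.1 hj
      linarith
    constructor <;> nlinarith
  have hev : ∀ u, q.eval u = ∑ j ∈ Finset.range (k+1), q.eval (x j) *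
      (Lagrange.basis (Finset.range (k+1)) x j).eval u := by
    intro u
    conv_lhs => rw [hinterp]
    simp [Lagrange.interpolate_apply, Polynomial.eval_finsetSum]
  have key : ∀ u ∈ Icc (0:ℝ) 1, ∀ w ∈ Icc (0:ℝ) 1, |q.eval u - q.eval w| ≤
      (∑ j ∈ Finset.range (k + 1), L (Lagrange.basis (Finset.range (k+1)) x j)) * M * |u - w| := by
    intro u hu w hw
    rw [hev u, hev w, ← Finset.sum_sub_distrib, Finset.sum_mul, Finset.sum_mul]
    refine (Finset.abs_sum_le_sum_abs _ _).trans (Finset.sum_le_sum fun j hj => ?_)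
    rw [← mul_sub, abs_mul]
    have h1 := hqM j hj
    have h2 := hL (Lagrange.basis (Finset.range (k+1)) x j) u hu w hw
    calc _ ≤ M * (L (Lagrange.basis (Finset.range (k+1)) x j) * |u - w|) :=
          mul_le_mul h1 h2 (abs_nonneg _) ((abs_nonneg _).trans h1)
      _ = _ := by ring
  have hmem : ∀ s ∈ Icc α β, (s - α) / (β - α) ∈ Icc (0:ℝ) 1 := by
    intro s hs
    exact ⟨div_nonneg (by linarith [hs.1]) hd.le, by rw [div_le_one hd]; linarith [hs.2]⟩
  have hback : ∀ s, q.eval ((s - α) / (β - α)) = p.eval s := by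
    intro s; rw [hqe]; congr 1; field_simp; ring
  have := key _ (hmem s hs) _ (hmem t ht)
  rw [hback, hback] at this
  refine this.trans (le_of_eq ?_)
  rw [← sub_div, abs_div, abs_of_pos hd, sub_sub_sub_cancel_right]
  ring

lemma gg_lin_Ici {s q : ℝ} (h : s < q) :
    ∫⁻ t in Ici q, ENNReal.ofReal (((t - s)^2)⁻¹) = ENNReal.ofReal ((q - s)⁻¹) := by
  rw [setLIntegral_congr (Ioi_ae_eq_Ici (a := q) (μ := volume)).symm]
  have hder : ∀ t ∈ Ici q, HasDerivAt (fun t => -(t - s)⁻¹) (((t - s)^2)⁻¹) t := by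
    intro t ht
    have hne : t - s ≠ 0 := by have : q ≤ t := ht; linarith
    have := (((hasDerivAt_id t).sub_const s).inv hne).neg
    refine this.congr_deriv ?_
    simp [neg_div]
  have hlim : Filter.Tendsto (fun t : ℝ => -(t - s)⁻¹) Filter.atTop (nhds 0) := by
    have : Filter.Tendsto (fun t : ℝ => t - s) Filter.atTop Filter.atTop :=
      Filter.tendsto_atTop_add_const_right _ (-s) Filter.tendsto_id
    simpa using (tendsto_inv_atTop_zero.comp this).neg
  have hpos : ∀ t ∈ Ioi q, 0 ≤ ((t - s)^2)⁻¹ := fun t _ => by positivity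
  have hI := integrableOn_Ioi_deriv_of_nonneg' hder hpos hlim
  have hV := integral_Ioi_of_hasDerivAt_of_nonneg' hder hpos hlim
  rw [← ofReal_integral_eq_lintegral_ofReal hI (Filter.Eventually.of_forall fun t => by positivity), hV]
  simp

lemma gg_lin_Iio {s q : ℝ} (h : q < s) :
    ∫⁻ t in Iio q, ENNReal.ofReal (((t - s)^2)⁻¹) = ENNReal.ofReal ((s - q)⁻¹) := by
  rw [setLIntegral_congr (Iio_ae_eq_Iic (a := q) (μ := volume))]
  have := gg_lin_Ici (s := -s) (q := -q) (by linarith)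
  rw [show -q - -s = s - q by ring] at this
  rw [← this, ← lintegral_indicator measurableSet_Iic, ← lintegral_indicator measurableSet_Ici,
    ← lintegral_neg_eq_self]
  congr 1
  ext t
  by_cases ht : t ∈ Ici (-q)
  · have h2 : -t ∈ Iic q := by simp only [mem_Ici, mem_Iic] at *; linarith
    rw [indicator_of_mem ht, indicator_of_mem h2]
    congr 2; ring
  · have h2 : -t ∉ Iic q := by simp only [mem_Ici, mem_Iic] at *; linarith
    rw [indicator_of_notMem ht, indicator_of_notMem h2]

lemma gg_log_right {x y z : ℝ} (h : x < y) (h' : y < z) :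
    ∫⁻ s in Ioo x y, ENNReal.ofReal ((z - s)⁻¹) = ENNReal.ofReal (Real.log (1 + (y - x) / (z - y))) := by
  have hc : ContinuousOn (fun s => (z - s)⁻¹) (uIcc x y) := by
    apply ContinuousOn.inv₀ (by fun_prop)
    intro s hs; rw [uIcc_of_le h.le] at hs; have := hs.2; linarith
  have hii : IntervalIntegrable (fun s => (z - s)⁻¹) volume x y := hc.intervalIntegrable
  have hv : ∫ s in x..y, (z - s)⁻¹ = -Real.log (z - y) - -Real.log (z - x) := by
    apply intervalIntegral.integral_eq_sub_of_hasDerivAt (f := fun s => -Real.log (z - s)) _ hii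
    intro s hs; rw [uIcc_of_le h.le] at hs
    have hne : z - s ≠ 0 := by have := hs.2; linarith
    have := (((hasDerivAt_id s).const_sub z).log hne).neg
    refine this.congr_deriv ?_
    simp [neg_div]
  rw [intervalIntegral.integral_of_le h.le, integral_Ioc_eq_integral_Ioo] at hv
  rw [intervalIntegrable_iff_integrableOn_Ioo_of_le h.le] at hii
  rw [← ofReal_integral_eq_lintegral_ofReal hii, hv]
  · congr 1
    rw [show 1 + (y - x) / (z - y) = (z - x) / (z - y) by
      have : z - y ≠ 0 := by linarith
      field_simp; ring, Real.log_div (by linarith) (by linarith)]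
    ring
  · refine (ae_restrict_iff' measurableSet_Ioo).2 (Filter.Eventually.of_forall fun s hs => ?_)
    exact inv_nonneg.2 (by have := hs.2; linarith)

lemma gg_log_left {x y z : ℝ} (h : x < y) (h' : z < x) :
    ∫⁻ s in Ioo x y, ENNReal.ofReal ((s - z)⁻¹) = ENNReal.ofReal (Real.log (1 + (y - x) / (x - z))) := by
  have hc : ContinuousOn (fun s => (s - z)⁻¹) (uIcc x y) := by
    apply ContinuousOn.inv₀ (by fun_prop)
    intro s hs; rw [uIcc_of_le h.le] at hs; have := hs.1; linarith
  have hii : IntervalIntegrable (fun s => (s - z)⁻¹) volume x y := hc.intervalIntegrable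
  have hv : ∫ s in x..y, (s - z)⁻¹ = Real.log (y - z) - Real.log (x - z) := by
    apply intervalIntegral.integral_eq_sub_of_hasDerivAt (f := fun s => Real.log (s - z)) _ hii
    intro s hs; rw [uIcc_of_le h.le] at hs
    have hne : s - z ≠ 0 := by have := hs.1; linarith
    have := (((hasDerivAt_id s).sub_const z).log hne)
    refine this.congr_deriv ?_
    simp
  rw [intervalIntegral.integral_of_le h.le, integral_Ioc_eq_integral_Ioo] at hv
  rw [intervalIntegrable_iff_integrableOn_Ioo_of_le h.le] at hii
  rw [← ofReal_integral_eq_lintegral_ofReal hii, hv]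
  · congr 1
    rw [show 1 + (y - x) / (x - z) = (y - z) / (x - z) by
      have : x - z ≠ 0 := by linarith
      field_simp; ring, Real.log_div (by linarith) (by linarith)]
  · refine (ae_restrict_iff' measurableSet_Ioo).2 (Filter.Eventually.of_forall fun s hs => ?_)
    exact inv_nonneg.2 (by have := hs.1; linarith)

/-- the kernel -/
noncomputable def ggKer (s t : ℝ) : ENNReal := ENNReal.ofReal (((t - s)^2)⁻¹)

lemma ggKer_symm (s t : ℝ) : ggKer s t = ggKer t s := by
  unfold ggKer; congr 2; ring

lemma ggKer_meas : Measurable (fun z : ℝ × ℝ => ggKer z.1 z.2) := by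
  unfold ggKer; fun_prop

noncomputable def ggH (α β A B D : ℝ) (U V : Set ℝ) (s t : ℝ) : ENNReal :=
  (Ico α β).indicator (fun _ => (1 : ENNReal)) s *
    (ENNReal.ofReal A * (Ico α β).indicator (fun _ => (1 : ENNReal)) t
      + (ENNReal.ofReal (B * (β - s)^2) * (Ici β).indicator (ggKer s) t
      + (ENNReal.ofReal (B * (s - α)^2) * (Iio α).indicator (ggKer s) t
      + (ENNReal.ofReal D * U.indicator (ggKer s) t
      + ENNReal.ofReal D * V.indicator (ggKer s) t))))

lemma ggInd_meas {U : Set ℝ} (hU : MeasurableSet U) :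
    Measurable (fun z : ℝ × ℝ => U.indicator (ggKer z.1) z.2) := by
  have : (fun z : ℝ × ℝ => U.indicator (ggKer z.1) z.2)
      = (Prod.snd ⁻¹' U).indicator (fun z : ℝ × ℝ => ggKer z.1 z.2) := by
    ext z
    by_cases h : z.2 ∈ U
    · rw [indicator_of_mem h, indicator_of_mem (by exact h)]
    · rw [indicator_of_notMem h, indicator_of_notMem (by exact h)]
  rw [this]
  exact ggKer_meas.indicator (measurable_snd hU)

lemma ggInd_meas' {U : Set ℝ} (hU : MeasurableSet U) (s : ℝ) :
    Measurable (U.indicator (ggKer s)) :=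
  (ggInd_meas hU).comp (measurable_const.prodMk measurable_id)

lemma ggH_meas (α β A B D : ℝ) {U V : Set ℝ} (hU : MeasurableSet U) (hV : MeasurableSet V) :
    Measurable (fun z : ℝ × ℝ => ggH α β A B D U V z.1 z.2) := by
  unfold ggH
  have h1 : Measurable (fun s : ℝ => (Ico α β).indicator (fun _ => (1 : ENNReal)) s) :=
    measurable_const.indicator measurableSet_Ico
  have h2 := ggInd_meas hU
  have h3 := ggInd_meas hV
  have h4 := ggInd_meas (U := Ici β) measurableSet_Ici
  have h5 := ggInd_meas (U := Iio α) measurableSet_Iio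
  refine (h1.comp measurable_fst).mul ?_
  refine ((h1.comp measurable_snd).const_mul _).add ?_
  refine Measurable.add (Measurable.mul (by fun_prop) h4) ?_
  refine Measurable.add (Measurable.mul (by fun_prop) h5) ?_
  exact (h2.const_mul _).add (h3.const_mul _)

lemma ggH_int {α β A B D LU LV : ℝ} (hαβ : α < β) (hA : 0 ≤ A) (hB : 0 ≤ B) (hD : 0 ≤ D)
    (hLU : 0 ≤ LU) (hLV : 0 ≤ LV) {U V : Set ℝ} (hU : MeasurableSet U) (hV : MeasurableSet V)
    (hIU : ∫⁻ s in Ioo α β, ∫⁻ t in U, ggKer s t ≤ ENNReal.ofReal LU)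
    (hIV : ∫⁻ s in Ioo α β, ∫⁻ t in V, ggKer s t ≤ ENNReal.ofReal LV) :
    ∫⁻ s, ∫⁻ t, ggH α β A B D U V s t ≤
      ENNReal.ofReal (A * (β - α)^2 + 2 * B * (β - α)^2 + D * (LU + LV)) := by
  have hh : 0 < β - α := by linarith
  have mker : ∀ W : Set ℝ, MeasurableSet W → Measurable (fun s => ∫⁻ t in W, ggKer s t) := by
    intro W hW
    exact Measurable.lintegral_prod_right' (f := fun z : ℝ × ℝ => ggKer z.1 z.2) ggKer_meas
  have e1 : ∀ s, ∫⁻ t, ggH α β A B D U V s t = (Ico α β).indicator (fun s =>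
      ENNReal.ofReal A * ENNReal.ofReal (β - α)
      + (ENNReal.ofReal (B * (β - s)^2) * (∫⁻ t in Ici β, ggKer s t)
      + (ENNReal.ofReal (B * (s - α)^2) * (∫⁻ t in Iio α, ggKer s t)
      + (ENNReal.ofReal D * (∫⁻ t in U, ggKer s t)
      + ENNReal.ofReal D * (∫⁻ t in V, ggKer s t))))) s := by
    intro s
    by_cases hs : s ∈ Ico α β
    · simp only [ggH, indicator_of_mem hs, one_mul]
      have m0 : Measurable (fun t : ℝ => (Ico α β).indicator (fun _ => (1 : ENNReal)) t) :=
        measurable_const.indicator measurableSet_Ico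
      rw [lintegral_add_left (m0.const_mul _), lintegral_add_left
        ((ggInd_meas' measurableSet_Ici s).const_mul _), lintegral_add_left
        ((ggInd_meas' measurableSet_Iio s).const_mul _), lintegral_add_left
        ((ggInd_meas' hU s).const_mul _), lintegral_const_mul _ m0,
        lintegral_const_mul _ (ggInd_meas' measurableSet_Ici s),
        lintegral_const_mul _ (ggInd_meas' measurableSet_Iio s),
        lintegral_const_mul _ (ggInd_meas' hU s),
        lintegral_const_mul _ (ggInd_meas' hV s),
        lintegral_indicator measurableSet_Ico, lintegral_indicator measurableSet_Ici,
        lintegral_indicator measurableSet_Iio, lintegral_indicator hU, lintegral_indicator hV]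
      simp
    · simp [ggH, indicator_of_notMem hs]
  simp_rw [e1]
  rw [lintegral_indicator measurableSet_Ico,
    setLIntegral_congr (Ioo_ae_eq_Ico (a := α) (b := β) (μ := volume)).symm]
  have step : ∫⁻ s in Ioo α β, (ENNReal.ofReal A * ENNReal.ofReal (β - α)
      + (ENNReal.ofReal (B * (β - s)^2) * (∫⁻ t in Ici β, ggKer s t)
      + (ENNReal.ofReal (B * (s - α)^2) * (∫⁻ t in Iio α, ggKer s t)
      + (ENNReal.ofReal D * (∫⁻ t in U, ggKer s t)
      + ENNReal.ofReal D * (∫⁻ t in V, ggKer s t))))) ≤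
      ∫⁻ s in Ioo α β, (ENNReal.ofReal ((A + 2 * B) * (β - α))
        + (ENNReal.ofReal D * (∫⁻ t in U, ggKer s t)
      + ENNReal.ofReal D * (∫⁻ t in V, ggKer s t))) := by
    refine setLIntegral_mono' measurableSet_Ioo fun s hs => ?_
    have hsβ : 0 < β - s := by linarith [hs.2]
    have hsα : 0 < s - α := by linarith [hs.1]
    have k1 : ∫⁻ t in Ici β, ggKer s t = ENNReal.ofReal ((β - s)⁻¹) := gg_lin_Ici hs.2
    have k2 : ∫⁻ t in Iio α, ggKer s t = ENNReal.ofReal ((s - α)⁻¹) := gg_lin_Iio hs.1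
    rw [k1, k2, ← add_assoc, ← add_assoc]
    gcongr
    rw [← ENNReal.ofReal_mul hA, ← ENNReal.ofReal_mul (by positivity),
      ← ENNReal.ofReal_mul (by positivity), ← ENNReal.ofReal_add (by positivity) (by positivity),
      ← ENNReal.ofReal_add (by positivity) (by positivity)]
    apply ENNReal.ofReal_le_ofReal
    have r1 : B * (β - s)^2 * (β - s)⁻¹ = B * (β - s) := by field_simp
    have r2 : B * (s - α)^2 * (s - α)⁻¹ = B * (s - α) := by field_simp
    rw [r1, r2]
    nlinarith [mul_nonneg hB hh.le]
  refine step.trans ?_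
  rw [lintegral_add_left measurable_const, lintegral_add_left ((mker U hU).const_mul _),
    lintegral_const_mul _ (mker U hU), lintegral_const_mul _ (mker V hV)]
  rw [lintegral_const, Measure.restrict_apply MeasurableSet.univ, univ_inter, Real.volume_Ioo,
    ← ENNReal.ofReal_mul (by positivity)]
  calc _ ≤ ENNReal.ofReal ((A + 2 * B) * (β - α) * (β - α)) + (ENNReal.ofReal D * ENNReal.ofReal LU
        + ENNReal.ofReal D * ENNReal.ofReal LV) := by gcongr
    _ = _ := by
      rw [← ENNReal.ofReal_mul hD, ← ENNReal.ofReal_mul hD,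
        ← ENNReal.ofReal_add (by positivity) (by positivity),
        ← ENNReal.ofReal_add (by positivity) (by positivity)]
      congr 1; ring

noncomputable def ggU (r : ℕ) (ξ : ℕ → ℝ) (i : ℕ) : Set ℝ := if i + 1 < r then Ici (ξ (i + 2)) else ∅
noncomputable def ggV (ξ : ℕ → ℝ) (i : ℕ) : Set ℝ := if 0 < i then Iio (ξ (i - 1)) else ∅
noncomputable def ggLU (r : ℕ) (ξ : ℕ → ℝ) (i : ℕ) : ℝ :=
  if i + 1 < r then Real.log (1 + (ξ (i+1) - ξ i) / (ξ (i + 2) - ξ (i+1))) else 0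
noncomputable def ggLV (ξ : ℕ → ℝ) (i : ℕ) : ℝ :=
  if 0 < i then Real.log (1 + (ξ (i+1) - ξ i) / (ξ i - ξ (i-1))) else 0

/-- the majorant attached to the `i`-th element -/
noncomputable def ggG (r : ℕ) (ξ : ℕ → ℝ) (K : ℝ) (M : ℕ → ℝ) (i : ℕ) (s t : ℝ) : ENNReal :=
  ggH (ξ i) (ξ (i+1)) ((K * M i / (ξ (i+1) - ξ i))^2) (2 * (K * M i / (ξ (i+1) - ξ i))^2)
    (2 * (M i)^2) (ggU r ξ i) (ggV ξ i) s t

lemma ggU_meas (r : ℕ) (ξ : ℕ → ℝ) (i : ℕ) : MeasurableSet (ggU r ξ i) := by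
  unfold ggU; split_ifs <;> measurability
lemma ggV_meas (ξ : ℕ → ℝ) (i : ℕ) : MeasurableSet (ggV ξ i) := by
  unfold ggV; split_ifs <;> measurability

lemma ggG_int {r : ℕ} {ξ : ℕ → ℝ} (hmono : ∀ i < r, ξ i < ξ (i + 1)) (K : ℝ) (M : ℕ → ℝ) {i : ℕ}
    (hi : i < r) : ∫⁻ s, ∫⁻ t, ggG r ξ K M i s t ≤
      ENNReal.ofReal (5 * K^2 * (M i)^2 + 2 * (M i)^2 * (ggLU r ξ i + ggLV ξ i)) := by
  have hi' := hmono i hi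
  have hh : 0 < ξ (i+1) - ξ i := by linarith
  have hLU : 0 ≤ ggLU r ξ i := by
    unfold ggLU; split_ifs with h
    · have := hmono _ h
      apply Real.log_nonneg
      have : 0 < ξ (i+2) - ξ (i+1) := by simpa using this
      have : 0 ≤ (ξ (i+1) - ξ i) / (ξ (i + 2) - ξ (i+1)) := by positivity
      linarith
    · exact le_rfl
  have hLV : 0 ≤ ggLV ξ i := by
    unfold ggLV; split_ifs with h
    · have := hmono (i-1) (by omega)
      rw [Nat.sub_add_cancel h] at this
      apply Real.log_nonneg
      have : 0 < ξ i - ξ (i-1) := by linarith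
      have : 0 ≤ (ξ (i+1) - ξ i) / (ξ i - ξ (i-1)) := by positivity
      linarith
    · exact le_rfl
  refine (ggH_int hi' (by positivity) (by positivity) (by positivity) hLU hLV
    (ggU_meas r ξ i) (ggV_meas ξ i) ?_ ?_).trans (le_of_eq ?_)
  · unfold ggU ggLU; split_ifs with h
    · have h2 : ξ (i+1) < ξ (i+2) := hmono _ h
      rw [← gg_log_right hi' h2]
      refine setLIntegral_mono' measurableSet_Ioo fun s hs => le_of_eq ?_
      exact gg_lin_Ici (hs.2.trans h2)
    · simp
  · unfold ggV ggLV; split_ifs with h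
    · have h2 := hmono (i-1) (by omega)
      rw [Nat.sub_add_cancel h] at h2
      rw [← gg_log_left hi' h2]
      refine setLIntegral_mono' measurableSet_Ioo fun s hs => le_of_eq ?_
      exact gg_lin_Iio (h2.trans hs.1)
    · simp
  · congr 1; field_simp; ring

lemma gg_mono {r : ℕ} {ξ : ℕ → ℝ} (hmono : ∀ i < r, ξ i < ξ (i + 1)) {i j : ℕ} (hij : i ≤ j)
    (hj : j ≤ r) : ξ i ≤ ξ j := by
  induction j, hij using Nat.le_induction with
  | base => exact le_rfl
  | succ n hn ih => exact (ih (by omega)).trans (hmono n (by omega)).le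

lemma gg_locate {r : ℕ} {ξ : ℕ → ℝ} {s : ℝ} (h0 : ξ 0 ≤ s) (hr : s < ξ r) :
    ∃ i < r, s ∈ Ico (ξ i) (ξ (i+1)) := by
  classical
  have hex : ∃ n, s < ξ n := ⟨r, hr⟩
  have hpos : Nat.find hex ≠ 0 := by
    intro h
    have := Nat.find_spec hex
    rw [h] at this; linarith
  obtain ⟨n, hn⟩ := Nat.exists_eq_succ_of_ne_zero hpos
  refine ⟨n, ?_, ?_, ?_⟩
  · have := Nat.find_min' hex hr; omega
  · exact not_lt.1 (Nat.find_min hex (m := n) (by omega))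
  · have := Nat.find_spec hex; rwa [hn] at this

lemma gg_pointwise {r : ℕ} {ξ : ℕ → ℝ} (hmono : ∀ i < r, ξ i < ξ (i + 1)) {K : ℝ} {M : ℕ → ℝ}
    {v : ℝ → ℝ}
    (hb : ∀ i < r, ∀ t ∈ Icc (ξ i) (ξ (i+1)), |v t| ≤ M i)
    (hL : ∀ i < r, ∀ s ∈ Icc (ξ i) (ξ (i+1)), ∀ t ∈ Icc (ξ i) (ξ (i+1)),
      |v s - v t| ≤ K * M i / (ξ (i+1) - ξ i) * |s - t|)
    {i j : ℕ} (hij : i ≤ j) (hj : j < r) {s t : ℝ} (hs : s ∈ Ico (ξ i) (ξ (i+1)))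
    (ht : t ∈ Ico (ξ j) (ξ (j+1))) :
    ENNReal.ofReal ((v s - v t)^2 / (s - t)^2) ≤ ggG r ξ K M i s t + ggG r ξ K M j t s := by
  have hsc := Ico_subset_Icc_self hs
  have htc := Ico_subset_Icc_self ht
  have hLs : ∀ i < r, ∀ s ∈ Icc (ξ i) (ξ (i+1)), ∀ t ∈ Icc (ξ i) (ξ (i+1)),
      (v s - v t)^2 ≤ (K * M i / (ξ (i+1) - ξ i))^2 * (s - t)^2 := by
    intro i hi s hs t ht
    have := pow_le_pow_left₀ (abs_nonneg _) (hL i hi s hs t ht) 2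
    rwa [mul_pow, sq_abs, sq_abs] at this
  have hsq : ∀ x y z : ℝ, (x - y)^2 ≤ 2 * (x - z)^2 + 2 * (y - z)^2 := by
    intro x y z; nlinarith [sq_nonneg (x + y - 2 * z)]
  rcases Nat.eq_or_lt_of_le hij with rfl | hlt
  · refine le_trans ?_ (le_add_right le_rfl)
    unfold ggG ggH
    rw [indicator_of_mem hs, indicator_of_mem ht, one_mul, mul_one]
    refine le_trans ?_ (le_add_right le_rfl)
    apply ENNReal.ofReal_le_ofReal
    exact div_le_of_le_mul₀ (sq_nonneg _) (sq_nonneg _) (hLs i hj s hsc t htc)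
  · have hir : i < r := by omega
    have hst : s < t := hs.2.trans_le ((gg_mono hmono hlt hj.le).trans ht.1)
    have hpos : 0 < (s - t)^2 := by have : s - t ≠ 0 := by linarith
                                    positivity
    rcases Nat.eq_or_lt_of_le (Nat.succ_le_of_lt hlt) with heq | hlt2
    · have heq : j = i + 1 := heq.symm
      subst heq
      calc ENNReal.ofReal ((v s - v t)^2 / (s - t)^2) ≤
          ENNReal.ofReal (2 * (K * M i / (ξ (i+1) - ξ i))^2 * (ξ (i+1) - s)^2) * ggKer s t
          + ENNReal.ofReal (2 * (K * M (i+1) / (ξ (i+1+1) - ξ (i+1)))^2 * (t - ξ (i+1))^2)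
            * ggKer t s := by
            unfold ggKer
            rw [← ENNReal.ofReal_mul (by positivity), ← ENNReal.ofReal_mul (by positivity),
              ← ENNReal.ofReal_add (by positivity) (by positivity)]
            apply ENNReal.ofReal_le_ofReal
            rw [show (t - s)^2 = (s - t)^2 by ring, ← add_mul, div_eq_mul_inv]
            gcongr
            have a1 := hLs i hir s hsc (ξ (i+1)) ⟨(hmono i hir).le, le_rfl⟩
            have a2 := hLs (i+1) hj t htc (ξ (i+1)) ⟨le_rfl, (hmono _ hj).le⟩
            have a3 := hsq (v s) (v t) (v (ξ (i+1)))
            rw [show (ξ (i+1) - s)^2 = (s - ξ (i+1))^2 by ring]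
            linarith
        _ ≤ _ := by
            have m1 : t ∈ Ici (ξ (i+1)) := ht.1
            have m2 : s ∈ Iio (ξ (i+1)) := hs.2
            unfold ggG ggH
            rw [indicator_of_mem hs, indicator_of_mem ht, one_mul, one_mul, indicator_of_mem m1,
              indicator_of_mem m2]
            gcongr
            · exact le_add_left (le_add_right le_rfl)
            · exact le_add_left (le_add_left (le_add_right le_rfl))
    · have hlt2 : i + 2 ≤ j := hlt2
      calc ENNReal.ofReal ((v s - v t)^2 / (s - t)^2) ≤
          ENNReal.ofReal (2 * (M i)^2) * ggKer s t
          + ENNReal.ofReal (2 * (M j)^2) * ggKer t s := by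
            unfold ggKer
            rw [← ENNReal.ofReal_mul (by positivity), ← ENNReal.ofReal_mul (by positivity),
              ← ENNReal.ofReal_add (by positivity) (by positivity)]
            apply ENNReal.ofReal_le_ofReal
            rw [show (t - s)^2 = (s - t)^2 by ring, ← add_mul, div_eq_mul_inv]
            gcongr
            have a1 := sq_le_sq' (by linarith [neg_abs_le (v s), hb i hir s hsc])
              ((le_abs_self _).trans (hb i hir s hsc))
            have a2 := sq_le_sq' (by linarith [neg_abs_le (v t), hb j hj t htc])
              ((le_abs_self _).trans (hb j hj t htc))
            have a3 := hsq (v s) (v t) 0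
            simp only [sub_zero] at a3
            linarith
        _ ≤ _ := by
            have m1 : t ∈ ggU r ξ i := by
              unfold ggU; rw [if_pos (by omega)]
              exact (gg_mono hmono hlt2 hj.le).trans ht.1
            have m2 : s ∈ ggV ξ j := by
              unfold ggV; rw [if_pos (by omega)]
              exact hs.2.trans_le (gg_mono hmono (by omega) (by omega))
            unfold ggG ggH
            rw [indicator_of_mem hs, indicator_of_mem ht, one_mul, one_mul, indicator_of_mem m1,
              indicator_of_mem m2]
            gcongr
            · exact le_add_left (le_add_left (le_add_left (le_add_right le_rfl)))
            · exact le_add_left (le_add_left (le_add_left (le_add_left le_rfl)))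

lemma gg_core {r : ℕ} {ξ : ℕ → ℝ} (hmono : ∀ i < r, ξ i < ξ (i + 1)) {K : ℝ} {M : ℕ → ℝ}
    {v : ℝ → ℝ}
    (hb : ∀ i < r, ∀ t ∈ Icc (ξ i) (ξ (i+1)), |v t| ≤ M i)
    (hL : ∀ i < r, ∀ s ∈ Icc (ξ i) (ξ (i+1)), ∀ t ∈ Icc (ξ i) (ξ (i+1)),
      |v s - v t| ≤ K * M i / (ξ (i+1) - ξ i) * |s - t|)
    {T : ℝ} (hT : ∀ i < r, 0 ≤ ggLU r ξ i + ggLV ξ i)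
    (hT' : 2 * ∑ i ∈ Finset.range r,
      (5 * K^2 * (M i)^2 + 2 * (M i)^2 * (ggLU r ξ i + ggLV ξ i)) ≤ T) :
    (∫ s in Ioo (ξ 0) (ξ r), ∫ t in Ioo (ξ 0) (ξ r), (v s - v t) ^ 2 / (s - t) ^ 2) ≤ T := by
  let G : ℝ → ℝ → ENNReal := fun s t => ∑ i ∈ Finset.range r, ggG r ξ K M i s t
  have hGi : ∀ i, Measurable (fun z : ℝ × ℝ => ggG r ξ K M i z.1 z.2) := fun i =>
    ggH_meas _ _ _ _ _ (ggU_meas r ξ i) (ggV_meas ξ i)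
  have hG : Measurable (fun z : ℝ × ℝ => G z.1 z.2) :=
    Finset.measurable_sum _ (fun i _ => hGi i)
  have hsum0 : ∀ i ∈ Finset.range r,
      0 ≤ 5 * K^2 * (M i)^2 + 2 * (M i)^2 * (ggLU r ξ i + ggLV ξ i) := by
    intro i hi
    have := hT i (Finset.mem_range.1 hi)
    positivity
  have hGint : ∫⁻ s, ∫⁻ t, G s t ≤ ENNReal.ofReal (∑ i ∈ Finset.range r,
      (5 * K^2 * (M i)^2 + 2 * (M i)^2 * (ggLU r ξ i + ggLV ξ i))) := by
    have e : ∀ s, ∫⁻ t, G s t = ∑ i ∈ Finset.range r, ∫⁻ t, ggG r ξ K M i s t := by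
      intro s
      exact lintegral_finsetSum _ fun i _ => (hGi i).comp (measurable_const.prodMk measurable_id)
    simp_rw [e]
    rw [lintegral_finsetSum _ fun i _ => (hGi i).lintegral_prod_right', ENNReal.ofReal_sum_of_nonneg hsum0]
    exact Finset.sum_le_sum fun i hi => ggG_int hmono K M (Finset.mem_range.1 hi)
  have hT0 : 0 ≤ T := le_trans (mul_nonneg (by norm_num) (Finset.sum_nonneg hsum0)) hT'
  rw [← ENNReal.ofReal_le_ofReal_iff hT0]
  have hpt : ∀ s ∈ Ioo (ξ 0) (ξ r), ∀ t ∈ Ioo (ξ 0) (ξ r),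
      ‖(v s - v t) ^ 2 / (s - t) ^ 2‖ₑ ≤ G s t + G t s := by
    intro s hs t ht
    rw [Real.enorm_of_nonneg (by positivity)]
    obtain ⟨i, hi, hsi⟩ := gg_locate hs.1.le hs.2
    obtain ⟨j, hj, htj⟩ := gg_locate ht.1.le ht.2
    have key : ENNReal.ofReal ((v s - v t)^2 / (s - t)^2) ≤
        ggG r ξ K M i s t + ggG r ξ K M j t s := by
      rcases le_total i j with h | h
      · exact gg_pointwise hmono hb hL h hj hsi htj
      · have := gg_pointwise hmono hb hL h hi htj hsi
        rw [show (v s - v t)^2 / (s - t)^2 = (v t - v s)^2 / (t - s)^2 by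
          rw [← neg_sub (v t), ← neg_sub t, neg_sq, neg_sq], add_comm]
        exact this
    refine key.trans (add_le_add ?_ ?_)
    · exact Finset.single_le_sum (f := fun i => ggG r ξ K M i s t) (fun _ _ => zero_le)
        (Finset.mem_range.2 hi)
    · exact Finset.single_le_sum (f := fun i => ggG r ξ K M i t s) (fun _ _ => zero_le)
        (Finset.mem_range.2 hj)
  calc ENNReal.ofReal (∫ s in Ioo (ξ 0) (ξ r), ∫ t in Ioo (ξ 0) (ξ r), (v s - v t) ^ 2 / (s - t) ^ 2)
      ≤ ‖∫ s in Ioo (ξ 0) (ξ r), ∫ t in Ioo (ξ 0) (ξ r), (v s - v t) ^ 2 / (s - t) ^ 2‖ₑ :=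
        Real.ofReal_le_enorm _
    _ ≤ ∫⁻ s in Ioo (ξ 0) (ξ r), ‖∫ t in Ioo (ξ 0) (ξ r), (v s - v t) ^ 2 / (s - t) ^ 2‖ₑ :=
        enorm_integral_le_lintegral_enorm _
    _ ≤ ∫⁻ s in Ioo (ξ 0) (ξ r), ∫⁻ t in Ioo (ξ 0) (ξ r), ‖(v s - v t) ^ 2 / (s - t) ^ 2‖ₑ :=
        lintegral_mono fun s => enorm_integral_le_lintegral_enorm _
    _ ≤ ∫⁻ s in Ioo (ξ 0) (ξ r), ∫⁻ t in Ioo (ξ 0) (ξ r), (G s t + G t s) :=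
        setLIntegral_mono' measurableSet_Ioo fun s hs =>
          setLIntegral_mono' measurableSet_Ioo fun t ht => hpt s hs t ht
    _ ≤ ∫⁻ s, ∫⁻ t, (G s t + G t s) :=
        (lintegral_mono fun s => setLIntegral_le_lintegral _ _).trans (setLIntegral_le_lintegral _ _)
    _ = (∫⁻ s, ∫⁻ t, G s t) + ∫⁻ s, ∫⁻ t, G t s := by
        have e : ∀ s, ∫⁻ t, (G s t + G t s) = (∫⁻ t, G s t) + ∫⁻ t, G t s := fun s =>
          lintegral_add_left (hG.comp (measurable_const.prodMk measurable_id)) _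
        simp_rw [e]
        exact lintegral_add_left hG.lintegral_prod_right' _
    _ = (∫⁻ s, ∫⁻ t, G s t) + ∫⁻ s, ∫⁻ t, G s t := by
        congr 1
        exact (lintegral_lintegral_swap (f := G) (by exact hG.aemeasurable)).symm
    _ ≤ ENNReal.ofReal (∑ i ∈ Finset.range r,
      (5 * K^2 * (M i)^2 + 2 * (M i)^2 * (ggLU r ξ i + ggLV ξ i))) + ENNReal.ofReal (∑ i ∈ Finset.range r,
      (5 * K^2 * (M i)^2 + 2 * (M i)^2 * (ggLU r ξ i + ggLV ξ i))) := add_le_add hGint hGint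
    _ ≤ ENNReal.ofReal T := by
        rw [← ENNReal.ofReal_add (Finset.sum_nonneg hsum0) (Finset.sum_nonneg hsum0)]
        apply ENNReal.ofReal_le_ofReal
        linarith

lemma gg_block {m r : ℕ} {β : ℕ → ℕ} (h0 : β 0 = 0) (hm : β m = r) {j : ℕ} (hj0 : 0 < j) (hj : j < r)
    (hne : j ∉ (Finset.range (m + 1)).image β) : ∃ l < m, β l ≤ j - 1 ∧ j < β (l + 1) := by
  classical
  have hex : ∃ n, j < β n := ⟨m, by omega⟩
  have hpos : Nat.find hex ≠ 0 := by
    intro h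
    have := Nat.find_spec hex
    rw [h] at this; omega
  obtain ⟨n, hn⟩ := Nat.exists_eq_succ_of_ne_zero hpos
  have hnm : n < m := by
    have := Nat.find_min' hex (m := m) (by omega); omega
  refine ⟨n, hnm, ?_, ?_⟩
  · have h1 := not_lt.1 (Nat.find_min hex (m := n) (by omega))
    have h2 : β n ≠ j := fun h => hne (Finset.mem_image.2 ⟨n, Finset.mem_range.2 (by omega), h⟩)
    omega
  · have := Nat.find_spec hex; rwa [hn] at this

lemma gg_count {S : Finset ℕ} {r n : ℕ} (hS : S.card ≤ n) (f : ℕ → ℕ) (hf : Function.Injective f)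
    {X : ℝ} (hX : 0 ≤ X) :
    ∑ i ∈ Finset.range r, (if f i ∈ S then X else 0) ≤ n * X := by
  classical
  rw [← Finset.sum_filter, Finset.sum_const, nsmul_eq_mul]
  have : ((Finset.range r).filter (fun i => f i ∈ S)).card ≤ S.card :=
    Finset.card_le_card_of_injOn f (fun i hi => (Finset.mem_filter.1 hi).2) hf.injOn
  have h2 : (((Finset.range r).filter (fun i => f i ∈ S)).card : ℝ) ≤ n := by
    exact_mod_cast this.trans hS
  gcongr

theorem gagliardo_bound_local_sup_plus_log_global_sup
    (mBar : ℕ) (cBar : ℝ) (hc : 1 ≤ cBar) (k : ℕ) :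
    ∃ C : ℝ, 0 < C ∧
      ∀ (a b : ℝ) (_hab : a < b) (r : ℕ) (hr : 0 < r) (ξ : ℕ → ℝ)
        (_h0 : ξ 0 = a) (_hr' : ξ r = b) (_hmono : ∀ i < r, ξ i < ξ (i + 1))
        -- `𝒯` is piecewise quasi-uniform with parameters `(mBar, cBar)`
        (_hpqu : ∃ m ≤ mBar, ∃ β : ℕ → ℕ, β 0 = 0 ∧ β m = r ∧
          (∀ l < m, β l < β (l + 1)) ∧
          ∀ l < m, ∀ i, β l ≤ i → i < β (l + 1) → ∀ j, β l ≤ j → j < β (l + 1) →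
            ξ (i + 1) - ξ i ≤ cBar * (ξ (j + 1) - ξ j))
        (v : ℝ → ℝ) (_hcont : ContinuousOn v (Icc a b))
        -- `v ∈ 𝕊_k(𝒯)`
        (_hpoly : ∀ i < r, ∃ p : Polynomial ℝ, p.natDegree ≤ k ∧
          ∀ t ∈ Ioo (ξ i) (ξ (i + 1)), v t = p.eval t),
        (∫ s in Ioo a b, ∫ t in Ioo a b, (v s - v t) ^ 2 / (s - t) ^ 2) ≤
          C * ((∑ i ∈ Finset.range r,
                (sSup ((fun t => |v t|) '' Ioo (ξ i) (ξ (i + 1)))) ^ 2) +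
              Real.log (1 +
                ((Finset.range r).sup' (Finset.nonempty_range_iff.mpr hr.ne')
                    fun i => ξ (i + 1) - ξ i) /
                ((Finset.range r).inf' (Finset.nonempty_range_iff.mpr hr.ne')
                    fun i => ξ (i + 1) - ξ i)) *
                (sSup ((fun t => |v t|) '' Icc a b)) ^ 2) := by
  classical
  obtain ⟨K, hK0, hK⟩ := gg_inverse k
  have hlc : 0 ≤ Real.log (1 + cBar) := Real.log_nonneg (by linarith)
  refine ⟨10 * K^2 + 8 * Real.log (1 + cBar) + 8 * (mBar + 1), by positivity, ?_⟩
  intro a b hab r hr ξ h0 hr' hmono ⟨m, hm, β, hβ0, hβm, _, hβ⟩ v hcont hpoly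
  subst h0 hr'
  set M : ℕ → ℝ := fun i => sSup ((fun t => |v t|) '' Ioo (ξ i) (ξ (i + 1))) with hMdef
  set N : ℝ := sSup ((fun t => |v t|) '' Icc (ξ 0) (ξ r)) with hNdef
  set hmax := (Finset.range r).sup' (Finset.nonempty_range_iff.mpr hr.ne')
                    fun i => ξ (i + 1) - ξ i with hmaxdef
  set hmin := (Finset.range r).inf' (Finset.nonempty_range_iff.mpr hr.ne')
                    fun i => ξ (i + 1) - ξ i with hmindef
  have hle_max : ∀ i < r, ξ (i+1) - ξ i ≤ hmax := fun i hi =>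
    Finset.le_sup' (fun i => ξ (i + 1) - ξ i) (Finset.mem_range.2 hi)
  have hmin_le : ∀ i < r, hmin ≤ ξ (i+1) - ξ i := fun i hi =>
    Finset.inf'_le (fun i => ξ (i + 1) - ξ i) (Finset.mem_range.2 hi)
  have hmin_pos : 0 < hmin := by
    rw [hmindef, Finset.lt_inf'_iff]
    intro i hi
    have := hmono i (Finset.mem_range.1 hi)
    linarith
  have hmax_pos : 0 < hmax := lt_of_lt_of_le (by linarith [hmono 0 hr]) (hle_max 0 hr)
  have hsub : ∀ i < r, Icc (ξ i) (ξ (i+1)) ⊆ Icc (ξ 0) (ξ r) := fun i hi =>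
    Icc_subset_Icc (gg_mono hmono (Nat.zero_le i) hi.le) (gg_mono hmono hi le_rfl)
  have hbdd : BddAbove ((fun t => |v t|) '' Icc (ξ 0) (ξ r)) :=
    isCompact_Icc.bddAbove_image hcont.abs
  have hMb : ∀ i < r, ∀ t ∈ Ioo (ξ i) (ξ (i+1)), |v t| ≤ M i := fun i hi t ht =>
    le_csSup (hbdd.mono (image_mono (Ioo_subset_Icc_self.trans (hsub i hi)))) ⟨t, ht, rfl⟩
  have hMN : ∀ i < r, M i ≤ N := fun i hi =>
    csSup_le_csSup hbdd ((nonempty_Ioo.2 (hmono i hi)).image _)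
      (image_mono (Ioo_subset_Icc_self.trans (hsub i hi)))
  have hM0 : ∀ i, 0 ≤ M i := fun i => Real.sSup_nonneg (by rintro _ ⟨t, _, rfl⟩; exact abs_nonneg _)
  have hb : ∀ i < r, ∀ t ∈ Icc (ξ i) (ξ (i+1)), |v t| ≤ M i := by
    intro i hi t ht
    have hcl := closure_Ioo (hmono i hi).ne
    rw [← hcl] at ht
    refine le_on_closure (f := fun t => |v t|) (g := fun _ => M i) (hMb i hi) ?_
      continuousOn_const ht
    rw [hcl]; exact (hcont.mono (hsub i hi)).abs
  have hL : ∀ i < r, ∀ s ∈ Icc (ξ i) (ξ (i+1)), ∀ t ∈ Icc (ξ i) (ξ (i+1)),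
      |v s - v t| ≤ K * M i / (ξ (i+1) - ξ i) * |s - t| := by
    intro i hi s hs t ht
    obtain ⟨p, hp, hvp⟩ := hpoly i hi
    have heq : EqOn v (fun t => p.eval t) (Icc (ξ i) (ξ (i+1))) := by
      refine EqOn.of_subset_closure (s := Ioo (ξ i) (ξ (i+1))) hvp (hcont.mono (hsub i hi))
        (by fun_prop) Ioo_subset_Icc_self ?_
      rw [closure_Ioo (hmono i hi).ne]
    rw [heq hs, heq ht]
    exact hK p hp _ _ _ (hmono i hi) (fun t ht => by rw [← hvp t ht]; exact hMb i hi t ht) s hs t ht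
  set LR := Real.log (1 + hmax / hmin) with hLR
  have hLR0 : 0 ≤ LR := Real.log_nonneg (by have : 0 < hmax / hmin := by positivity
                                            linarith)
  set S := (Finset.range (m + 1)).image β with hS
  have hScard : S.card ≤ mBar + 1 := by
    refine Finset.card_image_le.trans ?_
    rw [Finset.card_range]; omega
  -- logarithm bounds
  have hlog : ∀ i j, i < r → j < r → 0 ≤ Real.log (1 + (ξ (i+1) - ξ i) / (ξ (j+1) - ξ j)) ∧
      Real.log (1 + (ξ (i+1) - ξ i) / (ξ (j+1) - ξ j)) ≤ LR := by
    intro i j hi hj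
    have h1 : 0 < ξ (i+1) - ξ i := by linarith [hmono i hi]
    have h2 : 0 < ξ (j+1) - ξ j := by linarith [hmono j hj]
    have h3 : 0 < (ξ (i+1) - ξ i) / (ξ (j+1) - ξ j) := by positivity
    refine ⟨Real.log_nonneg (by linarith), Real.log_le_log (by linarith) ?_⟩
    gcongr
    · exact hle_max i hi
    · exact hmin_le j hj
  have hlogc : ∀ i j, i < r → j < r → ξ (i+1) - ξ i ≤ cBar * (ξ (j+1) - ξ j) →
      Real.log (1 + (ξ (i+1) - ξ i) / (ξ (j+1) - ξ j)) ≤ Real.log (1 + cBar) := by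
    intro i j hi hj h
    have h1 : 0 < ξ (i+1) - ξ i := by linarith [hmono i hi]
    have h2 : 0 < ξ (j+1) - ξ j := by linarith [hmono j hj]
    have h3 : 0 < (ξ (i+1) - ξ i) / (ξ (j+1) - ξ j) := by positivity
    refine Real.log_le_log (by linarith) ?_
    gcongr
    rwa [div_le_iff₀ h2]
  have hU : ∀ i < r, 0 ≤ ggLU r ξ i ∧ (M i)^2 * ggLU r ξ i ≤
      Real.log (1 + cBar) * (M i)^2 + if i + 1 ∈ S then LR * N^2 else 0 := by
    intro i hi
    unfold ggLU
    by_cases h : i + 1 < r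
    · rw [if_pos h]
      have hl := hlog i (i+1) hi h
      refine ⟨hl.1, ?_⟩
      by_cases hiS : i + 1 ∈ S
      · rw [if_pos hiS]
        have : (M i)^2 ≤ N^2 := pow_le_pow_left₀ (hM0 i) (hMN i hi) 2
        have h2 := mul_le_mul this hl.2 hl.1 (by positivity)
        have h3 : 0 ≤ Real.log (1 + cBar) * (M i)^2 := by positivity
        linarith
      · rw [if_neg hiS]
        obtain ⟨l, hl1, hl2, hl3⟩ := gg_block hβ0 hβm (Nat.succ_pos i) h hiS
        have := hlogc i (i+1) hi h (hβ l hl1 i (by omega) (by omega) (i+1) (by omega) (by omega))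
        have h2 := mul_le_mul_of_nonneg_left this (sq_nonneg (M i))
        linarith
    · rw [if_neg h]
      refine ⟨le_rfl, ?_⟩
      rw [mul_zero]
      split_ifs <;> positivity
  have hV : ∀ i < r, 0 ≤ ggLV ξ i ∧ (M i)^2 * ggLV ξ i ≤
      Real.log (1 + cBar) * (M i)^2 + if i ∈ S then LR * N^2 else 0 := by
    intro i hi
    unfold ggLV
    by_cases h : 0 < i
    · rw [if_pos h]
      obtain ⟨j, rfl⟩ : ∃ j, i = j + 1 := ⟨i - 1, by omega⟩
      have hl := hlog (j+1) j hi (by omega)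
      rw [Nat.add_sub_cancel]
      refine ⟨hl.1, ?_⟩
      by_cases hiS : j + 1 ∈ S
      · rw [if_pos hiS]
        have : (M (j+1))^2 ≤ N^2 := pow_le_pow_left₀ (hM0 _) (hMN _ hi) 2
        have h2 := mul_le_mul this hl.2 hl.1 (by positivity)
        have h3 : 0 ≤ Real.log (1 + cBar) * (M (j+1))^2 := by positivity
        linarith
      · rw [if_neg hiS]
        obtain ⟨l, hl1, hl2, hl3⟩ := gg_block hβ0 hβm h hi hiS
        have := hlogc (j+1) j hi (by omega)
          (hβ l hl1 (j+1) (by omega) (by omega) j (by omega) (by omega))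
        have h2 := mul_le_mul_of_nonneg_left this (sq_nonneg (M (j+1)))
        linarith
    · rw [if_neg h]
      refine ⟨le_rfl, ?_⟩
      rw [mul_zero]
      split_ifs <;> positivity
  refine gg_core hmono hb hL (fun i hi => add_nonneg (hU i hi).1 (hV i hi).1) ?_
  have hX : 0 ≤ LR * N^2 := by positivity
  have c1 := gg_count (r := r) hScard (fun i => i + 1) (add_left_injective 1) hX
  have c2 := gg_count (r := r) hScard (fun i => i) (fun _ _ h => h) hX
  have hterm : ∑ i ∈ Finset.range r,
      (5 * K^2 * (M i)^2 + 2 * (M i)^2 * (ggLU r ξ i + ggLV ξ i)) ≤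
      ∑ i ∈ Finset.range r, ((5 * K^2 + 4 * Real.log (1 + cBar)) * (M i)^2 +
        (2 * (if i + 1 ∈ S then LR * N^2 else 0) + 2 * (if i ∈ S then LR * N^2 else 0))) := by
    refine Finset.sum_le_sum fun i hi => ?_
    have u := (hU i (Finset.mem_range.1 hi)).2
    have w := (hV i (Finset.mem_range.1 hi)).2
    linarith
  have hrhs := Finset.sum_add_distrib (s := Finset.range r)
    (f := fun i => (5 * K^2 + 4 * Real.log (1 + cBar)) * (M i)^2)
    (g := fun i => 2 * (if i + 1 ∈ S then LR * N^2 else 0) + 2 * (if i ∈ S then LR * N^2 else 0))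
  rw [Finset.sum_add_distrib (f := fun i => 2 * (if i + 1 ∈ S then LR * N^2 else 0)),
    ← Finset.mul_sum, ← Finset.mul_sum, ← Finset.mul_sum] at hrhs
  rw [hrhs] at hterm
  change _ ≤ _ * (∑ i ∈ Finset.range r, (M i)^2 + _)
  push_cast at c1 c2
  have hsq : 0 ≤ ∑ i ∈ Finset.range r, (M i)^2 := Finset.sum_nonneg fun _ _ => sq_nonneg _
  have p1 : 0 ≤ (8 * ((mBar:ℝ) + 1)) * ∑ i ∈ Finset.range r, (M i)^2 := by positivity
  have p2 : 0 ≤ (10 * K^2 + 8 * Real.log (1 + cBar)) * (LR * N^2) := by positivity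
  linarith
end

section
/- For N ∈ ℕ, N ≥ 1, let ψ_N : [0,1] → ℝ be the continuous piecewise linear function on the uniform mesh with nodes x_i = i/N (i = 0,…,N) that satisfies ψ_N(x_i) = (−1)^i for every node. Then Σ_{i=1}^{N} (sup_{x ∈ (x_{i−1}, x_i)} |ψ_N(x)|)² = N, and there exist constants c, C > 0 independent of N such that c·N ≤ ∫_0^1 ∫_0^1 (ψ_N(x) − ψ_N(y))²/(x − y)² dx dy ≤ C·N for all N ≥ 2. In particular, the estimate |v|²_{1/2} ≲ log(1 + R) Σ_e ‖v‖²_{L∞(e)} is sharp with respect to the number of mesh elements. -/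
open MeasureTheory Set

lemma gag_index (N : ℕ) (hN : 1 ≤ N) (s : ℝ) (h0 : 0 ≤ s) (h1 : s ≤ 1) :
    ∃ i < N, s ∈ Icc ((i : ℝ) / N) (((i : ℝ) + 1) / N) := by
  have hNp : (0 : ℝ) < N := by exact_mod_cast hN
  rcases h1.lt_or_eq with h | h
  · refine ⟨⌊(N : ℝ) * s⌋₊, ?_, ?_, ?_⟩
    · rw [Nat.floor_lt (by positivity)]; nlinarith
    · rw [div_le_iff₀ hNp, mul_comm s]; exact Nat.floor_le (by positivity)
    · rw [le_div_iff₀ hNp, mul_comm s]; exact (Nat.lt_floor_add_one _).le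
  · subst h
    obtain ⟨k, rfl⟩ : ∃ k, N = k + 1 := ⟨N - 1, by omega⟩
    refine ⟨k, by omega, ?_, ?_⟩
    · rw [div_le_iff₀ hNp]; push_cast; linarith
    · rw [le_div_iff₀ hNp]; push_cast; linarith

lemma gag_formula (N : ℕ) (hN : 1 ≤ N) (ψ : ℝ → ℝ)
    (h : ∀ i < N, ∃ α β : ℝ, ∀ t ∈ Icc ((i : ℝ) / N) (((i : ℝ) + 1) / N), ψ t = α * t + β)
    (hn : ∀ i ≤ N, ψ ((i : ℝ) / N) = (-1 : ℝ) ^ i) :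
    ∀ i < N, ∀ t ∈ Icc ((i : ℝ) / N) (((i : ℝ) + 1) / N),
      ψ t = (-1 : ℝ) ^ i * (1 - 2 * (N * t - i)) := by
  intro i hi t ht
  have hNp : (0 : ℝ) < N := by exact_mod_cast hN
  obtain ⟨α, β, hab⟩ := h i hi
  have hle : (i : ℝ) / N ≤ ((i : ℝ) + 1) / N := by gcongr; linarith
  have e1 := hn i hi.le
  have e2 := hn (i + 1) hi
  push_cast at e2
  rw [hab _ ⟨le_rfl, hle⟩] at e1
  rw [hab _ ⟨hle, le_rfl⟩, pow_succ] at e2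
  rw [hab t ht]
  have e3 : α = -2 * N * (-1) ^ i := by
    field_simp at e1 e2
    linarith
  have e4 : β = (-1) ^ i - α * (i / N) := by linarith
  rw [e4, e3]
  field_simp
  ring

lemma gag_abs_pow (i : ℕ) (x : ℝ) : |(-1 : ℝ) ^ i * x| = |x| := by
  rw [abs_mul, abs_pow, abs_neg, abs_one, one_pow, one_mul]

lemma gag_same (N : ℕ) (ψ : ℝ → ℝ)
    (h : ∀ i < N, ∀ t ∈ Icc ((i : ℝ) / N) (((i : ℝ) + 1) / N),
      ψ t = (-1 : ℝ) ^ i * (1 - 2 * (N * t - i))) (i : ℕ) (hi : i < N) (s t : ℝ)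
    (hs : s ∈ Icc ((i : ℝ) / N) (((i : ℝ) + 1) / N))
    (ht : t ∈ Icc ((i : ℝ) / N) (((i : ℝ) + 1) / N)) :
    |ψ s - ψ t| = 2 * N * |s - t| := by
  rw [h i hi s hs, h i hi t ht, ← mul_sub, gag_abs_pow]
  have : (1 - 2 * (N * s - i) - (1 - 2 * (N * t - i)) : ℝ) = -(2 * N * (s - t)) := by ring
  rw [this, abs_neg, abs_mul, abs_of_nonneg (by positivity)]

lemma gag_bdd (N : ℕ) (hN : 1 ≤ N) (ψ : ℝ → ℝ)
    (h : ∀ i < N, ∀ t ∈ Icc ((i : ℝ) / N) (((i : ℝ) + 1) / N),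
      ψ t = (-1 : ℝ) ^ i * (1 - 2 * (N * t - i))) (s : ℝ) (h0 : 0 ≤ s) (h1 : s ≤ 1) :
    |ψ s| ≤ 1 := by
  have hNp : (0 : ℝ) < N := by exact_mod_cast hN
  obtain ⟨i, hi, hs⟩ := gag_index N hN s h0 h1
  rw [h i hi s hs, gag_abs_pow, abs_le]
  have a := hs.1
  have b := hs.2
  rw [div_le_iff₀ hNp] at a
  rw [le_div_iff₀ hNp] at b
  constructor <;> linarith

lemma gag_lip_aux (N : ℕ) (hN : 1 ≤ N) (ψ : ℝ → ℝ)
    (h : ∀ i < N, ∀ t ∈ Icc ((i : ℝ) / N) (((i : ℝ) + 1) / N),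
      ψ t = (-1 : ℝ) ^ i * (1 - 2 * (N * t - i))) (s t : ℝ) (h0 : 0 ≤ s) (hst : s ≤ t)
    (h1 : t ≤ 1) : |ψ s - ψ t| ≤ 2 * N * (t - s) := by
  have hNp : (0 : ℝ) < N := by exact_mod_cast hN
  obtain ⟨i, hi, hs⟩ := gag_index N hN s h0 (hst.trans h1)
  have key : ∀ j < N, ∀ a b : ℝ, a ∈ Icc ((j : ℝ) / N) (((j : ℝ) + 1) / N) →
      b ∈ Icc ((j : ℝ) / N) (((j : ℝ) + 1) / N) → a ≤ b → |ψ a - ψ b| ≤ 2 * N * (b - a) := by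
    intro j hj a b ha hb hab
    rw [gag_same N ψ h j hj a b ha hb, abs_sub_comm, abs_of_nonneg (sub_nonneg.2 hab)]
  by_cases c1 : t ≤ ((i : ℝ) + 1) / N
  · exact key i hi s t hs ⟨hs.1.trans hst, c1⟩ hst
  push Not at c1
  by_cases c2 : t ≤ ((i : ℝ) + 2) / N
  · have hi1 : i + 1 < N := by
      have := c1.trans_le h1
      rw [div_lt_one hNp] at this
      exact_mod_cast this
    have hle : ((i : ℝ) + 1) / N ≤ ((i : ℝ) + 1 + 1) / N := by gcongr; linarith
    have hle' : (i : ℝ) / N ≤ ((i : ℝ) + 1) / N := by gcongr; linarith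
    have k1 := key i hi s (((i : ℝ) + 1) / N) hs ⟨hle', le_rfl⟩ hs.2
    have k2 := key (i + 1) hi1 (((i : ℝ) + 1) / N) t
      (by push_cast; exact ⟨le_rfl, hle⟩)
      (by push_cast; exact ⟨c1.le, c2.trans_eq (by ring)⟩) c1.le
    have := abs_sub_le (ψ s) (ψ (((i : ℝ) + 1) / N)) (ψ t)
    linarith
  · push Not at c2
    have b1 := abs_le.1 (gag_bdd N hN ψ h s h0 (hst.trans h1))
    have b2 := abs_le.1 (gag_bdd N hN ψ h t (h0.trans hst) h1)
    have hs2 := hs.2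
    rw [le_div_iff₀ hNp] at hs2
    rw [div_lt_iff₀ hNp] at c2
    rw [abs_le]
    constructor <;> nlinarith

lemma gag_lip (N : ℕ) (hN : 1 ≤ N) (ψ : ℝ → ℝ)
    (h : ∀ i < N, ∀ t ∈ Icc ((i : ℝ) / N) (((i : ℝ) + 1) / N),
      ψ t = (-1 : ℝ) ^ i * (1 - 2 * (N * t - i))) (s t : ℝ) (h0 : 0 ≤ s) (h0' : 0 ≤ t)
    (h1 : s ≤ 1) (h1' : t ≤ 1) : |ψ s - ψ t| ≤ 2 * N * |s - t| := by
  rcases le_total s t with hst | hst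
  · have := gag_lip_aux N hN ψ h s t h0 hst h1'
    rwa [abs_sub_comm s, abs_of_nonneg (sub_nonneg.2 hst)]
  · have := gag_lip_aux N hN ψ h t s h0' hst h1
    rwa [abs_sub_comm (ψ s), abs_of_nonneg (sub_nonneg.2 hst)]

lemma gag_sup (N : ℕ) (hN : 1 ≤ N) (ψ : ℝ → ℝ)
    (h : ∀ i < N, ∀ t ∈ Icc ((i : ℝ) / N) (((i : ℝ) + 1) / N),
      ψ t = (-1 : ℝ) ^ i * (1 - 2 * (N * t - i))) (i : ℕ) (hi : i < N) :
    sSup ((fun t => |ψ t|) '' Ioo ((i : ℝ) / N) (((i : ℝ) + 1) / N)) = 1 := by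
  have hNp : (0 : ℝ) < N := by exact_mod_cast hN
  have hlt : (i : ℝ) / N < ((i : ℝ) + 1) / N := by gcongr; linarith
  apply csSup_eq_of_forall_le_of_forall_lt_exists_gt
  · exact (nonempty_Ioo.2 hlt).image _
  · rintro _ ⟨t, ht, rfl⟩
    have a := ht.1
    have b := ht.2
    show |ψ t| ≤ 1
    rw [h i hi t (Ioo_subset_Icc_self ht), gag_abs_pow, abs_le]
    rw [div_lt_iff₀ hNp] at a
    rw [lt_div_iff₀ hNp] at b
    constructor <;> linarith
  · intro w hw
    obtain ⟨v, hv0, hv1, hwv⟩ : ∃ v : ℝ, 0 ≤ v ∧ v < 1 ∧ w ≤ v :=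
      ⟨max w 0, le_max_right _ _, max_lt hw one_pos, le_max_left _ _⟩
    have hm : ((i : ℝ) + (1 - v) / 4) / N ∈ Ioo ((i : ℝ) / N) (((i : ℝ) + 1) / N) := by
      constructor <;> gcongr <;> linarith
    refine ⟨_, ⟨_, hm, rfl⟩, ?_⟩
    show w < |ψ _|
    rw [h i hi _ (Ioo_subset_Icc_self hm), gag_abs_pow, mul_div_cancel₀ _ hNp.ne']
    refine lt_of_lt_of_le ?_ (le_abs_self _)
    linarith

lemma gag_main (N : ℕ) (hN : 1 ≤ N) (g : ℝ → ℝ) (hb : ∀ s, |g s| ≤ 1)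
    (hl : ∀ s t, |g s - g t| ≤ 2 * N * |s - t|)
    (hsame : ∀ s ∈ Ioo (0 : ℝ) 1, ∃ a : ℝ, 0 ≤ a ∧ a + 1 / N ≤ 1 ∧
      ∀ t ∈ Ioo a (a + 1 / N), |g s - g t| = 2 * N * |s - t|) :
    4 * (N : ℝ) ≤ (∫ s in Ioo (0 : ℝ) 1, ∫ t in Ioo (0 : ℝ) 1,
        (g s - g t) ^ 2 / (s - t) ^ 2) ∧
    (∫ s in Ioo (0 : ℝ) 1, ∫ t in Ioo (0 : ℝ) 1,
        (g s - g t) ^ 2 / (s - t) ^ 2) ≤ (8 * Real.pi) * N := by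
  have hNp : (0 : ℝ) < N := by exact_mod_cast hN
  have hcont : Continuous g := by
    refine LipschitzWith.continuous (K := 2 * N) (LipschitzWith.of_dist_le_mul ?_)
    intro s t
    simpa [Real.dist_eq] using hl s t
  have hsq : ∀ s t, (g s - g t) ^ 2 ≤ 4 * N ^ 2 * (s - t) ^ 2 := by
    intro s t
    have := pow_le_pow_left₀ (abs_nonneg _) (hl s t) 2
    rw [mul_pow, sq_abs, sq_abs] at this
    linarith
  have hsq2 : ∀ s t, (g s - g t) ^ 2 ≤ 4 := by
    intro s t
    have a := abs_le.1 (hb s)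
    have b := abs_le.1 (hb t)
    nlinarith
  have hF0 : ∀ s t, 0 ≤ (g s - g t) ^ 2 / (s - t) ^ 2 := fun s t => by positivity
  have hFb : ∀ s t, (g s - g t) ^ 2 / (s - t) ^ 2 ≤ 4 * N ^ 2 := by
    intro s t
    exact div_le_of_le_mul₀ (by positivity) (by positivity) (hsq s t)
  have hmeas : Measurable fun p : ℝ × ℝ => (g p.1 - g p.2) ^ 2 / (p.1 - p.2) ^ 2 := by
    have := hcont.measurable
    fun_prop
  have hI2 : Integrable (fun p : ℝ × ℝ => (g p.1 - g p.2) ^ 2 / (p.1 - p.2) ^ 2)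
      ((volume.restrict (Ioo (0 : ℝ) 1)).prod (volume.restrict (Ioo (0 : ℝ) 1))) := by
    refine Integrable.of_bound hmeas.aestronglyMeasurable (4 * N ^ 2) (Filter.Eventually.of_forall ?_)
    intro p
    rw [Real.norm_of_nonneg (hF0 _ _)]
    exact hFb _ _
  have hI1 : ∀ s, IntegrableOn (fun t => (g s - g t) ^ 2 / (s - t) ^ 2) (Ioo (0 : ℝ) 1) := by
    intro s
    refine Integrable.of_bound (Measurable.aestronglyMeasurable ?_) (4 * N ^ 2)
      (Filter.Eventually.of_forall ?_)
    · have := hcont.measurable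
      fun_prop
    · intro t
      rw [Real.norm_of_nonneg (hF0 _ _)]
      exact hFb _ _
  have hvol : volume.real (Ioo (0 : ℝ) 1) = 1 := by simp
  constructor
  · have hlow : ∀ s ∈ Ioo (0 : ℝ) 1,
        4 * (N : ℝ) ≤ ∫ t in Ioo (0 : ℝ) 1, (g s - g t) ^ 2 / (s - t) ^ 2 := by
      intro s hs
      obtain ⟨a, ha0, ha1, ha⟩ := hsame s hs
      have hsub : Ioo a (a + 1 / N) ⊆ Ioo (0 : ℝ) 1 := Ioo_subset_Ioo ha0 ha1
      have e : ∫ t in Ioo a (a + 1 / N), (g s - g t) ^ 2 / (s - t) ^ 2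
          = ∫ t in Ioo a (a + 1 / N), (4 * N ^ 2 : ℝ) := by
        refine setIntegral_congr_ae measurableSet_Ioo ?_
        have hne : ∀ᵐ t : ℝ, t ≠ s := by simp [ae_iff]
        filter_upwards [hne] with t hts ht
        have h2 : (g s - g t) ^ 2 = 4 * N ^ 2 * (s - t) ^ 2 := by
          rw [← sq_abs, ha t ht, mul_pow, sq_abs]; ring
        have : (s - t) ^ 2 ≠ 0 := pow_ne_zero 2 (sub_ne_zero.2 hts.symm)
        rw [h2, mul_div_cancel_right₀ _ this]
      calc 4 * (N : ℝ) = ∫ t in Ioo a (a + 1 / N), (4 * N ^ 2 : ℝ) := by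
            rw [setIntegral_const, Real.volume_real_Ioo_of_le (by simp), smul_eq_mul]
            field_simp
            ring
        _ = _ := e.symm
        _ ≤ _ := setIntegral_mono_set (hI1 s) (Filter.Eventually.of_forall fun t => hF0 s t)
            hsub.eventuallyLE
    calc 4 * (N : ℝ) = ∫ s in Ioo (0 : ℝ) 1, 4 * (N : ℝ) := by
          rw [setIntegral_const, hvol, one_smul]
      _ ≤ _ := setIntegral_mono_on (integrable_const _) hI2.integral_prod_left
          measurableSet_Ioo hlow
  · have hup : ∀ s, ∫ t in Ioo (0 : ℝ) 1, (g s - g t) ^ 2 / (s - t) ^ 2 ≤ 8 * Real.pi * N := by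
      intro s
      have hint : Integrable fun t : ℝ => 8 * (N : ℝ) ^ 2 * (1 + (N * (t - s)) ^ 2)⁻¹ := by
        have := (integrable_inv_one_add_sq.comp_mul_left' hNp.ne').comp_sub_right s
        exact this.const_mul _
      have hval : ∫ t : ℝ, 8 * (N : ℝ) ^ 2 * (1 + (N * (t - s)) ^ 2)⁻¹ = 8 * Real.pi * N := by
        rw [integral_const_mul,
          integral_sub_right_eq_self (fun t : ℝ => (1 + ((N : ℝ) * t) ^ 2)⁻¹) s,
          Measure.integral_comp_mul_left (fun t : ℝ => (1 + t ^ 2)⁻¹) (N : ℝ),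
          integral_univ_inv_one_add_sq, abs_of_pos (by positivity), smul_eq_mul]
        field_simp
      have hpt : ∀ t, (g s - g t) ^ 2 / (s - t) ^ 2
          ≤ 8 * (N : ℝ) ^ 2 * (1 + (N * (t - s)) ^ 2)⁻¹ := by
        intro t
        refine div_le_of_le_mul₀ (by positivity) (by positivity) ?_
        have h1 := hsq s t
        have h2 := hsq2 s t
        have hp : 0 < 1 + ((N : ℝ) * (t - s)) ^ 2 := by positivity
        rw [mul_assoc, mul_comm (_ ⁻¹), ← mul_assoc, ← div_eq_mul_inv, le_div_iff₀ hp]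
        have h3 := mul_le_mul_of_nonneg_right h2 (sq_nonneg ((N : ℝ) * (t - s)))
        nlinarith
      calc _ ≤ ∫ t in Ioo (0 : ℝ) 1, 8 * (N : ℝ) ^ 2 * (1 + (N * (t - s)) ^ 2)⁻¹ :=
            integral_mono (hI1 s) hint.integrableOn hpt
        _ ≤ ∫ t : ℝ, 8 * (N : ℝ) ^ 2 * (1 + (N * (t - s)) ^ 2)⁻¹ :=
            setIntegral_le_integral hint (Filter.Eventually.of_forall fun t => by positivity)
        _ = _ := hval
    calc _ ≤ ∫ s in Ioo (0 : ℝ) 1, 8 * Real.pi * (N : ℝ) :=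
          integral_mono hI2.integral_prod_left (integrable_const _) hup
      _ = _ := by rw [setIntegral_const, hvol, one_smul]

/-- For `N ≥ 1`, let `ψ_N : [0,1] → ℝ` be the continuous piecewise linear
function on the uniform mesh with nodes `i/N` taking the value `(-1)^i` at the `i`-th node.
Then `Σ_{i} (sup_{e_i} |ψ_N|)² = N`, and there are constants `c, C > 0` independent of `N`
such that `c·N ≤ |ψ_N|²_{1/2} ≤ C·N` for all `N ≥ 2`: the estimate
`|v|²_{1/2} ≲ log(1+R) Σ_e ‖v‖²_{L∞(e)}` is sharp with respect to the number of elements. -/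
theorem gagliardo_sharpness_oscillating_piecewise_linear :
    ∃ c C : ℝ, 0 < c ∧ 0 < C ∧
      ∀ (N : ℕ) (ψ : ℝ → ℝ),
        ContinuousOn ψ (Icc (0 : ℝ) 1) →
        -- `ψ` is affine on each element of the uniform mesh with `N` elements
        (∀ i < N, ∃ α β : ℝ,
          ∀ t ∈ Icc ((i : ℝ) / N) (((i : ℝ) + 1) / N), ψ t = α * t + β) →
        -- nodal values `ψ(i/N) = (-1)^i`
        (∀ i ≤ N, ψ ((i : ℝ) / N) = (-1 : ℝ) ^ i) →
        (1 ≤ N →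
          ∑ i ∈ Finset.range N,
            (sSup ((fun t => |ψ t|) '' Ioo ((i : ℝ) / N) (((i : ℝ) + 1) / N))) ^ 2
            = (N : ℝ)) ∧
        (2 ≤ N →
          c * N ≤ (∫ s in Ioo (0 : ℝ) 1, ∫ t in Ioo (0 : ℝ) 1,
              (ψ s - ψ t) ^ 2 / (s - t) ^ 2) ∧
          (∫ s in Ioo (0 : ℝ) 1, ∫ t in Ioo (0 : ℝ) 1,
              (ψ s - ψ t) ^ 2 / (s - t) ^ 2) ≤ C * N) := by
  refine ⟨4, 8 * Real.pi, by norm_num, by positivity, ?_⟩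
  intro N ψ _ haff hnod
  refine ⟨fun hN => ?_, fun hN2 => ?_⟩
  · have hf := gag_formula N hN ψ haff hnod
    rw [Finset.sum_congr rfl (g := fun _ => (1 : ℝ))]
    · simp
    · intro i hi
      rw [gag_sup N hN ψ hf i (Finset.mem_range.1 hi), one_pow]
  · have hN : 1 ≤ N := by omega
    have hNp : (0 : ℝ) < N := by exact_mod_cast hN
    have hf := gag_formula N hN ψ haff hnod
    have p0 : ∀ x : ℝ, 0 ≤ max 0 (min 1 x) := fun x => le_max_left _ _
    have p1 : ∀ x : ℝ, max 0 (min 1 x) ≤ 1 := fun x => max_le zero_le_one (min_le_left _ _)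
    have pe : ∀ x ∈ Icc (0 : ℝ) 1, max 0 (min 1 x) = x := fun x hx => by
      rw [min_eq_right hx.2, max_eq_right hx.1]
    have heq : (∫ s in Ioo (0 : ℝ) 1, ∫ t in Ioo (0 : ℝ) 1, (ψ s - ψ t) ^ 2 / (s - t) ^ 2)
        = ∫ s in Ioo (0 : ℝ) 1, ∫ t in Ioo (0 : ℝ) 1,
          (ψ (max 0 (min 1 s)) - ψ (max 0 (min 1 t))) ^ 2 / (s - t) ^ 2 := by
      refine setIntegral_congr_fun measurableSet_Ioo fun s hs => ?_
      refine setIntegral_congr_fun measurableSet_Ioo fun t ht => ?_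
      simp only [pe s (Ioo_subset_Icc_self hs), pe t (Ioo_subset_Icc_self ht)]
    rw [heq]
    refine gag_main N hN (fun x => ψ (max 0 (min 1 x))) ?_ ?_ ?_
    · intro s
      exact gag_bdd N hN ψ hf _ (p0 s) (p1 s)
    · intro s t
      refine (gag_lip N hN ψ hf _ _ (p0 s) (p0 t) (p1 s) (p1 t)).trans ?_
      refine mul_le_mul_of_nonneg_left ?_ (by positivity)
      have h1 := abs_max_sub_max_le_max 0 (min 1 s) 0 (min 1 t)
      have h2 := abs_min_sub_min_le_max 1 s 1 t
      rw [sub_self, abs_zero, max_eq_right (abs_nonneg (_ : ℝ))] at h1 h2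
      exact h1.trans h2
    · intro s hs
      obtain ⟨i, hi, hsi⟩ := gag_index N hN s hs.1.le hs.2.le
      have e : (i : ℝ) / N + 1 / N = ((i : ℝ) + 1) / N := by ring
      have hi1 : ((i : ℝ) + 1) / N ≤ 1 := by
        rw [div_le_one hNp]; exact_mod_cast hi
      refine ⟨(i : ℝ) / N, by positivity, by rw [e]; exact hi1, ?_⟩
      intro t ht
      rw [e] at ht
      have ht01 : t ∈ Icc (0 : ℝ) 1 :=
        ⟨(by positivity : (0 : ℝ) ≤ (i : ℝ) / N).trans ht.1.le, ht.2.le.trans hi1⟩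
      simp only [pe s (Ioo_subset_Icc_self hs), pe t ht01]
      exact gag_same N ψ hf i hi s t hsi (Ioo_subset_Icc_self ht)
end

section
/- For every c̄ ≥ 1 there exists a constant C > 0 (depending only on c̄) with the following property: for every compact interval [a,b], every mesh 𝒯 of [a,b] with nodes a = x_0 < ⋯ < x_r = b that is quasi-uniform with constant c̄, and every bounded measurable function w : [a,b] → ℝ, the sum over all non-adjacent pairs of elements satisfies Σ_{i=1}^{r−2} Σ_{j=i+2}^{r} ∫_{e_i} ∫_{e_j} (w(x) − w(y))²/(x − y)² dy dx ≤ C · Σ_{i=1}^{r} (sup_{x ∈ e_i} |w(x)|)². -/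
open MeasureTheory Set

lemma aux_sum_sq (n : ℕ) : ∑ k ∈ Finset.range n, (1 : ℝ) / ((k : ℝ) + 1) ^ 2 ≤ 2 := by
  have h : ∀ n : ℕ, ∑ k ∈ Finset.range (n + 1), (1 : ℝ) / ((k : ℝ) + 1) ^ 2
      ≤ 2 - 1 / ((n : ℝ) + 1) := by
    intro n
    induction n with
    | zero => norm_num
    | succ n ih =>
      rw [Finset.sum_range_succ]
      have key : (1 : ℝ) / ((n : ℝ) + 1 + 1) ^ 2 ≤ 1 / ((n : ℝ) + 1) - 1 / ((n : ℝ) + 1 + 1) := by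
        rw [div_sub_div _ _ (by positivity) (by positivity),
          div_le_div_iff₀ (by positivity) (by positivity)]
        nlinarith [Nat.cast_nonneg (α := ℝ) n]
      push_cast
      linarith
  rcases n with _ | n
  · norm_num
  have h1 := h n
  have h2 : (0 : ℝ) ≤ 1 / ((n : ℝ) + 1) := by positivity
  linarith

lemma aux_double (r : ℕ) (f : ℕ → ℝ) (hf : ∀ i, 0 ≤ f i) :
    ∑ i ∈ Finset.range r, ∑ j ∈ Finset.Ico (i + 2) r,
      (f i + f j) * (1 / (((j - (i + 2) : ℕ) : ℝ) + 1) ^ 2) ≤ 4 * ∑ i ∈ Finset.range r, f i := by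
  simp only [add_mul, Finset.sum_add_distrib]
  have h1 : ∑ i ∈ Finset.range r, ∑ j ∈ Finset.Ico (i + 2) r,
      f i * (1 / (((j - (i + 2) : ℕ) : ℝ) + 1) ^ 2) ≤ ∑ i ∈ Finset.range r, f i * 2 := by
    refine Finset.sum_le_sum fun i _ => ?_
    rw [← Finset.mul_sum, Finset.sum_Ico_eq_sum_range]
    simp only [Nat.add_sub_cancel_left]
    exact mul_le_mul_of_nonneg_left (aux_sum_sq _) (hf i)
  have h2 : ∑ i ∈ Finset.range r, ∑ j ∈ Finset.Ico (i + 2) r,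
      f j * (1 / (((j - (i + 2) : ℕ) : ℝ) + 1) ^ 2) ≤ ∑ i ∈ Finset.range r, f i * 2 := by
    rw [Finset.sum_comm' (t' := Finset.range r) (s' := fun j => Finset.range (j - 1))
      (by intro x y; simp only [Finset.mem_range, Finset.mem_Ico]; omega)]
    refine Finset.sum_le_sum fun j _ => ?_
    rw [← Finset.mul_sum]
    refine mul_le_mul_of_nonneg_left ?_ (hf j)
    refine le_trans (le_of_eq ?_) (aux_sum_sq (j - 1))
    rw [← Finset.sum_range_reflect]
    refine Finset.sum_congr rfl fun i hi => ?_
    rw [Finset.mem_range] at hi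
    rw [show j - (j - 1 - 1 - i + 2) = i by omega]
  rw [← Finset.sum_mul] at h1 h2
  linarith

lemma aux_int (w : ℝ → ℝ) (p q u v S T D : ℝ) (hpq : p ≤ q) (huv : u ≤ v) (hD : 0 < D)
    (hgap : D ≤ u - q) (hS : ∀ s ∈ Ioo p q, |w s| ≤ S) (hT : ∀ t ∈ Ioo u v, |w t| ≤ T) :
    ∫ s in Ioo p q, ∫ t in Ioo u v, (w s - w t) ^ 2 / (s - t) ^ 2 ≤
      2 * (S ^ 2 + T ^ 2) / D ^ 2 * (v - u) * (q - p) := by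
  have h1 : ∀ s ∈ Ioo p q, ‖∫ t in Ioo u v, (w s - w t) ^ 2 / (s - t) ^ 2‖ ≤
      2 * (S ^ 2 + T ^ 2) / D ^ 2 * (v - u) := by
    intro s hs
    have h := norm_setIntegral_le_of_norm_le_const (μ := volume) (s := Ioo u v)
      (f := fun t => (w s - w t) ^ 2 / (s - t) ^ 2) (C := 2 * (S ^ 2 + T ^ 2) / D ^ 2)
      (by simp) (by
        intro t ht
        have a1 := sq_le_sq' (abs_le.1 (hS s hs)).1 (abs_le.1 (hS s hs)).2
        have a2 := sq_le_sq' (abs_le.1 (hT t ht)).1 (abs_le.1 (hT t ht)).2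
        rw [Real.norm_of_nonneg (by positivity)]
        have hs2 := hs.2
        have ht1 := ht.1
        apply div_le_div₀ (by positivity) _ (by positivity)
        · nlinarith
        · nlinarith [sq_nonneg (w s + w t)])
    simpa [Real.volume_real_Ioo_of_le huv] using h
  have h := norm_setIntegral_le_of_norm_le_const (μ := volume) (s := Ioo p q) (by simp) h1
  rw [Real.volume_real_Ioo_of_le hpq] at h
  exact (Real.le_norm_self _).trans h

lemma aux_gap (ξ : ℕ → ℝ) (r i : ℕ) (δ : ℝ) (h : ∀ k < r, δ ≤ ξ (k + 1) - ξ k) (n : ℕ)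
    (hn : i + n ≤ r) : n * δ ≤ ξ (i + n) - ξ i := by
  induction n with
  | zero => simp
  | succ n ih =>
    have h1 := ih (by omega)
    have h2 := h (i + n) (by omega)
    rw [← add_assoc]
    push_cast
    linarith

/-- For every `cBar ≥ 1` there is `C > 0` (depending only on `cBar`) such
that for every compact interval `[a,b]`, every quasi-uniform mesh of `[a,b]` with constant
`cBar`, and every bounded measurable `w : [a,b] → ℝ`, the sum over all non-adjacent pairs of
elements of the double integrals of `(w(x)-w(y))²/(x-y)²` is bounded by
`C · Σ_i (sup_{e_i} |w|)²`. -/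
theorem nonadjacent_pairs_bound (cBar : ℝ) (hc : 1 ≤ cBar) :
    ∃ C : ℝ, 0 < C ∧
      ∀ (a b : ℝ) (_hab : a < b) (r : ℕ) (_hr : 0 < r) (ξ : ℕ → ℝ)
        (_h0 : ξ 0 = a) (_hr' : ξ r = b) (_hmono : ∀ i < r, ξ i < ξ (i + 1))
        -- quasi-uniformity: the ratio of any two element lengths is at most `cBar`
        (_hqu : ∀ i < r, ∀ j < r, ξ (i + 1) - ξ i ≤ cBar * (ξ (j + 1) - ξ j))
        (w : ℝ → ℝ) (_hmeas : Measurable w)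
        (_hbdd : ∃ M : ℝ, ∀ t ∈ Icc a b, |w t| ≤ M),
        (∑ i ∈ Finset.range r, ∑ j ∈ Finset.Ico (i + 2) r,
            ∫ s in Ioo (ξ i) (ξ (i + 1)), ∫ t in Ioo (ξ j) (ξ (j + 1)),
              (w s - w t) ^ 2 / (s - t) ^ 2) ≤
          C * ∑ i ∈ Finset.range r,
              (sSup ((fun t => |w t|) '' Ioo (ξ i) (ξ (i + 1)))) ^ 2 := by
  refine ⟨8 * cBar ^ 3, by positivity, ?_⟩
  intro a b hab r hr ξ h0 hr' hmono hqu w hmeas hbdd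
  obtain ⟨M, hM⟩ := hbdd
  set S : ℕ → ℝ := fun i => sSup ((fun t => |w t|) '' Ioo (ξ i) (ξ (i + 1))) with hSdef
  have hle : ∀ i n, i + n ≤ r → ξ i ≤ ξ (i + n) := by
    intro i n hn
    have := aux_gap ξ r i 0 (fun k hk => by linarith [hmono k hk]) n hn
    linarith
  have hS : ∀ i < r, ∀ s ∈ Ioo (ξ i) (ξ (i + 1)), |w s| ≤ S i := by
    intro i hi s hs
    refine le_csSup ⟨M, ?_⟩ ⟨s, hs, rfl⟩
    rintro _ ⟨t, ht, rfl⟩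
    apply hM
    have e1 := hle 0 i (by omega)
    have e2 := hle (i + 1) (r - (i + 1)) (by omega)
    rw [show i + 1 + (r - (i + 1)) = r by omega] at e2
    rw [zero_add] at e1
    exact ⟨by linarith [ht.1], by linarith [ht.2]⟩
  have hc0 : 0 < cBar := by linarith
  have hpair : ∀ i ∈ Finset.range r, ∀ j ∈ Finset.Ico (i + 2) r,
      ∫ s in Ioo (ξ i) (ξ (i + 1)), ∫ t in Ioo (ξ j) (ξ (j + 1)),
              (w s - w t) ^ 2 / (s - t) ^ 2 ≤
      2 * cBar ^ 3 * ((S i ^ 2 + S j ^ 2) * (1 / (((j - (i + 2) : ℕ) : ℝ) + 1) ^ 2)) := by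
    intro i hi j hj
    rw [Finset.mem_range] at hi
    rw [Finset.mem_Ico] at hj
    obtain ⟨d, rfl⟩ := Nat.exists_eq_add_of_le hj.1
    have hH := hmono i hi
    have hH2 := hmono (i + 2 + d) hj.2
    have hg := aux_gap ξ r (i + 1) ((ξ (i + 1) - ξ i) / cBar)
      (fun k hk => by rw [div_le_iff₀ hc0]; linarith [hqu i hi k hk]) (d + 1) (by omega)
    rw [show i + 1 + (d + 1) = i + 2 + d by omega] at hg
    have hq := hqu (i + 2 + d) hj.2 i hi
    set H := ξ (i + 1) - ξ i with hHdef
    have hHp : 0 < H := by linarith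
    push_cast at hg
    have hd : (0 : ℝ) < (d : ℝ) + 1 := by positivity
    refine (aux_int w _ _ _ _ (S i) (S (i + 2 + d)) _ hH.le hH2.le (by positivity) hg
      (hS i hi) (hS _ hj.2)).trans ?_
    rw [Nat.add_sub_cancel_left, ← hHdef]
    calc _ ≤ 2 * (S i ^ 2 + S (i + 2 + d) ^ 2) / (((d : ℝ) + 1) * (H / cBar)) ^ 2 *
            (cBar * H) * H := by gcongr
      _ = _ := by field_simp
  calc _ ≤ ∑ i ∈ Finset.range r, ∑ j ∈ Finset.Ico (i + 2) r,
      2 * cBar ^ 3 * ((S i ^ 2 + S j ^ 2) * (1 / (((j - (i + 2) : ℕ) : ℝ) + 1) ^ 2)) :=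
        Finset.sum_le_sum fun i hi => Finset.sum_le_sum fun j hj => hpair i hi j hj
    _ = 2 * cBar ^ 3 * ∑ i ∈ Finset.range r, ∑ j ∈ Finset.Ico (i + 2) r,
      (S i ^ 2 + S j ^ 2) * (1 / (((j - (i + 2) : ℕ) : ℝ) + 1) ^ 2) := by
        simp only [Finset.mul_sum]
    _ ≤ 2 * cBar ^ 3 * (4 * ∑ i ∈ Finset.range r, S i ^ 2) :=
        mul_le_mul_of_nonneg_left (aux_double r (fun i => S i ^ 2) (fun i => sq_nonneg _))
          (by positivity)
    _ = _ := by ring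
end

section
/- For every c̄ ≥ 1 and every k ∈ ℕ there exists a constant C > 0 (depending only on c̄ and k) with the following property: for every compact interval [a,b], every mesh 𝒯 of [a,b] with nodes a = x_0 < ⋯ < x_r = b that is quasi-uniform with constant c̄, and every w ∈ 𝕊_k(𝒯), the sum over all pairs of equal or adjacent elements satisfies Σ_{i=1}^{r} Σ_{j, |j−i| ≤ 1, 1 ≤ j ≤ r} ∫_{e_i} ∫_{e_j} (w(x) − w(y))²/(x − y)² dy dx ≤ C · Σ_{i=1}^{r} (sup_{x ∈ e_i} |w(x)|)². -/
open MeasureTheory Set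

lemma poly_lip (p : Polynomial ℝ) : ∃ M : ℝ, 0 ≤ M ∧ ∀ s ∈ Icc (0:ℝ) 1, ∀ t ∈ Icc (0:ℝ) 1,
    |p.eval s - p.eval t| ≤ M * |s - t| := by
  obtain ⟨M, hM⟩ := (isCompact_Icc (a := (0:ℝ)) (b := 1)).exists_bound_of_continuousOn
    (f := fun x => p.derivative.eval x) (p.derivative.continuous.continuousOn)
  refine ⟨M, (norm_nonneg _).trans (hM 0 (by simp)), fun s hs t ht => ?_⟩
  have := (convex_Icc (0:ℝ) 1).norm_image_sub_le_of_norm_hasDerivWithin_le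
    (f := fun x => p.eval x) (f' := fun x => p.derivative.eval x)
    (fun x _ => (p.hasDerivAt x).hasDerivWithinAt) hM ht hs
  simpa [Real.norm_eq_abs] using this

lemma markov01_s4 (k : ℕ) : ∃ M : ℝ, 0 ≤ M ∧ ∀ (p : Polynomial ℝ), p.natDegree ≤ k → ∀ S : ℝ,
    (∀ t ∈ Ioo (0:ℝ) 1, |p.eval t| ≤ S) → ∀ s ∈ Icc (0:ℝ) 1, ∀ t ∈ Icc (0:ℝ) 1,
    |p.eval s - p.eval t| ≤ M * S * |s - t| := by
  let v : ℕ → ℝ := fun i => ((i:ℝ) + 1) / (k + 2)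
  let l : ℕ → Polynomial ℝ := fun i => Lagrange.basis (Finset.range (k+1)) v i
  choose M hM0 hM using fun i => poly_lip (l i)
  refine ⟨∑ i ∈ Finset.range (k+1), M i, Finset.sum_nonneg fun i _ => hM0 i, ?_⟩
  intro p hp S hS s hs t ht
  have hk : (0:ℝ) < k + 2 := by positivity
  have hinj : Set.InjOn v (Finset.range (k+1)) := by
    intro i _ j _ h
    simp only [v] at h
    field_simp at h
    exact_mod_cast (by linarith : (i:ℝ) = j)
  have hpe := Lagrange.eq_interpolate (s := Finset.range (k+1)) (v := v) (f := p) hinj (by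
    rw [Finset.card_range]
    exact lt_of_le_of_lt Polynomial.degree_le_natDegree (by exact_mod_cast Nat.lt_succ_of_le hp))
  have hev : ∀ x, p.eval x = ∑ i ∈ Finset.range (k+1), p.eval (v i) * (l i).eval x := by
    intro x
    conv_lhs => rw [hpe]
    simp [Lagrange.interpolate_apply, Polynomial.eval_finset_sum, l]
  rw [hev s, hev t, ← Finset.sum_sub_distrib, Finset.sum_mul, Finset.sum_mul]
  refine (Finset.abs_sum_le_sum_abs _ _).trans (Finset.sum_le_sum fun i hi => ?_)
  rw [← mul_sub, abs_mul]
  have hi' : (i:ℝ) + 1 ≤ k + 1 := by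
    have := Finset.mem_range.mp hi
    exact_mod_cast this
  have h1 := hS (v i) ⟨by positivity, by
    simp only [v]; rw [div_lt_one hk]; linarith⟩
  have h2 := hM i s hs t ht
  calc _ ≤ S * (M i * |s - t|) := mul_le_mul h1 h2 (abs_nonneg _) ((abs_nonneg _).trans h1)
    _ = _ := by ring

lemma markov_s4 (k : ℕ) : ∃ M : ℝ, 0 ≤ M ∧ ∀ (α β : ℝ), α < β → ∀ w : ℝ → ℝ,
    ContinuousOn w (Icc α β) →
    (∃ p : Polynomial ℝ, p.natDegree ≤ k ∧ ∀ t ∈ Ioo α β, w t = p.eval t) →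
    ∀ s ∈ Icc α β, ∀ t ∈ Icc α β,
    |w s - w t| ≤ M * (sSup ((fun t => |w t|) '' Ioo α β)) / (β - α) * |s - t| := by
  obtain ⟨M, hM0, hM⟩ := markov01_s4 k
  refine ⟨M, hM0, ?_⟩
  rintro α β hab w hw ⟨p, hp, hwp⟩ s hs t ht
  have hd : 0 < β - α := sub_pos.mpr hab
  have heq : EqOn w (fun x => p.eval x) (Icc α β) :=
    EqOn.of_subset_closure (s := Ioo α β) (fun x hx => hwp x hx) hw p.continuous.continuousOn
      Ioo_subset_Icc_self (by rw [closure_Ioo hab.ne])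
  have hbdd : BddAbove ((fun t => |w t|) '' Ioo α β) :=
    (isCompact_Icc.bddAbove_image hw.abs).mono (image_mono Ioo_subset_Icc_self)
  set S := sSup ((fun t => |w t|) '' Ioo α β)
  let q := p.comp (Polynomial.C α + Polynomial.C (β - α) * Polynomial.X)
  have hq : q.natDegree ≤ k := by
    refine Polynomial.natDegree_comp_le.trans ?_
    have : (Polynomial.C α + Polynomial.C (β - α) * Polynomial.X).natDegree ≤ 1 := by
      compute_degree
    exact (Nat.mul_le_mul hp this).trans (by simp)
  have hqe : ∀ x, q.eval x = p.eval (α + (β - α) * x) := fun x => by simp [q]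
  have hqS : ∀ x ∈ Ioo (0:ℝ) 1, |q.eval x| ≤ S := by
    intro x hx
    have hm : α + (β - α) * x ∈ Ioo α β := ⟨by nlinarith [hx.1], by nlinarith [hx.2]⟩
    rw [hqe, ← hwp _ hm]
    exact le_csSup hbdd (mem_image_of_mem _ hm)
  have hm : ∀ x ∈ Icc α β, (x - α) / (β - α) ∈ Icc (0:ℝ) 1 := fun x hx =>
    ⟨div_nonneg (by linarith [hx.1]) hd.le, by rw [div_le_one hd]; linarith [hx.2]⟩
  have hx : ∀ x ∈ Icc α β, q.eval ((x - α) / (β - α)) = w x := by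
    intro x hx
    rw [hqe, heq hx]
    simp only
    congr 1
    field_simp
    ring
  have := hM q hq S hqS _ (hm s hs) _ (hm t ht)
  rw [hx s hs, hx t ht, ← sub_div, abs_div, abs_of_pos hd] at this
  refine this.trans (le_of_eq ?_)
  rw [sub_sub_sub_cancel_right]
  field_simp

/-- bound for one pair -/
lemma pair_bound (α β γ δ : ℝ) (h1 : α < β) (h2 : γ < δ) (L : ℝ)
    (w : ℝ → ℝ) (h : ∀ s ∈ Ioo α β, ∀ t ∈ Ioo γ δ, |w s - w t| ≤ L * |s - t|) :
    (∫ s in Ioo α β, ∫ t in Ioo γ δ, (w s - w t) ^ 2 / (s - t) ^ 2)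
      ≤ L ^ 2 * (δ - γ) * (β - α) := by
  have hin : ∀ s ∈ Ioo α β, ‖∫ t in Ioo γ δ, (w s - w t) ^ 2 / (s - t) ^ 2‖
      ≤ L ^ 2 * (δ - γ) := by
    intro s hs
    have := norm_setIntegral_le_of_norm_le_const (μ := volume) (s := Ioo γ δ) (C := L ^ 2)
      (f := fun t => (w s - w t) ^ 2 / (s - t) ^ 2) (by simp) (by
        intro t ht
        rw [Real.norm_of_nonneg (by positivity)]
        refine div_le_of_le_mul₀ (by positivity) (by positivity) ?_
        have := pow_le_pow_left₀ (abs_nonneg _) (h s hs t ht) 2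
        rwa [mul_pow, sq_abs, sq_abs] at this)
    simpa [Measure.real, ENNReal.toReal_ofReal (sub_pos.mpr h2).le] using this
  have := norm_setIntegral_le_of_norm_le_const (μ := volume) (s := Ioo α β)
      (C := L ^ 2 * (δ - γ)) (by simp) hin
  refine (Real.le_norm_self _).trans ?_
  simpa [Measure.real, ENNReal.toReal_ofReal (sub_pos.mpr h1).le] using this

lemma pair_alg (c M A B h g : ℝ) (hh : 0 < h) (hg : 0 < g) (h1 : h ≤ c * g)
    (h2 : g ≤ c * h) : (M * A / h + M * B / g) ^ 2 * g * h ≤ 2 * M ^ 2 * c * (A ^ 2 + B ^ 2) := by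
  have e1 : g / h ≤ c := by rw [div_le_iff₀ hh]; exact h2
  have e2 : h / g ≤ c := by rw [div_le_iff₀ hg]; exact h1
  calc (M * A / h + M * B / g) ^ 2 * g * h
      ≤ 2 * ((M * A / h) ^ 2 + (M * B / g) ^ 2) * (g * h) := by
        rw [mul_assoc]
        gcongr
        nlinarith [sq_nonneg (M * A / h - M * B / g)]
    _ = 2 * M ^ 2 * (A ^ 2 * (g / h) + B ^ 2 * (h / g)) := by field_simp
    _ ≤ 2 * M ^ 2 * (A ^ 2 * c + B ^ 2 * c) := by gcongr
    _ = _ := by ring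

lemma glue (w : ℝ → ℝ) (α β γ L K : ℝ) (hL : 0 ≤ L) (hK : 0 ≤ K)
    (h1 : ∀ s ∈ Icc α β, ∀ t ∈ Icc α β, |w s - w t| ≤ L * |s - t|)
    (h2 : ∀ s ∈ Icc β γ, ∀ t ∈ Icc β γ, |w s - w t| ≤ K * |s - t|)
    (s t : ℝ) (hs : s ∈ Ioo α β) (ht : t ∈ Ioo β γ) : |w s - w t| ≤ (L + K) * |s - t| := by
  have a1 := h1 s ⟨hs.1.le, hs.2.le⟩ β ⟨(hs.1.trans hs.2).le, le_rfl⟩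
  have a2 := h2 β ⟨le_rfl, (ht.1.trans ht.2).le⟩ t ⟨ht.1.le, ht.2.le⟩
  have a3 := abs_sub_le (w s) (w β) (w t)
  have := hs.2
  have := ht.1
  rw [abs_of_neg (by linarith : s - β < 0)] at a1
  rw [abs_of_neg (by linarith : β - t < 0)] at a2
  rw [abs_of_neg (by linarith : s - t < 0)]
  nlinarith [mul_nonneg hL (by linarith : 0 ≤ t - β), mul_nonneg hK (by linarith : 0 ≤ β - s)]

lemma card_filter_le (r i : ℕ) :
    ((Finset.range r).filter (fun j => j ≤ i + 1 ∧ i ≤ j + 1)).card ≤ 3 := by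
  have : (Finset.range r).filter (fun j => j ≤ i + 1 ∧ i ≤ j + 1) ⊆ Finset.Icc (i - 1) (i + 1) := by
    intro j hj
    simp only [Finset.mem_filter, Finset.mem_Icc] at *
    omega
  refine (Finset.card_le_card this).trans ?_
  simp only [Nat.card_Icc]
  omega

lemma sum_bound (r : ℕ) (F : ℕ → ℝ) (hF : ∀ i, 0 ≤ F i) :
    ∑ i ∈ Finset.range r, ∑ j ∈ (Finset.range r).filter (fun j => j ≤ i + 1 ∧ i ≤ j + 1),
      (F i + F j) ≤ 6 * ∑ i ∈ Finset.range r, F i := by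
  have h1 : ∑ i ∈ Finset.range r, ∑ j ∈ (Finset.range r).filter (fun j => j ≤ i + 1 ∧ i ≤ j + 1),
      F i ≤ 3 * ∑ i ∈ Finset.range r, F i := by
    rw [Finset.mul_sum]
    refine Finset.sum_le_sum fun i _ => ?_
    rw [Finset.sum_const, nsmul_eq_mul]
    exact mul_le_mul_of_nonneg_right (by exact_mod_cast card_filter_le r i) (hF i)
  have h2 : ∑ i ∈ Finset.range r, ∑ j ∈ (Finset.range r).filter (fun j => j ≤ i + 1 ∧ i ≤ j + 1),
      F j = ∑ i ∈ Finset.range r,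
        ∑ j ∈ (Finset.range r).filter (fun j => j ≤ i + 1 ∧ i ≤ j + 1), F i := by
    refine Finset.sum_comm' fun x y => ?_
    simp only [Finset.mem_filter, Finset.mem_range]
    omega
  simp only [Finset.sum_add_distrib] at *
  linarith


/-- For every `cBar ≥ 1` and `k ∈ ℕ` there is `C > 0` (depending only on
`cBar` and `k`) such that for every compact interval `[a,b]`, every quasi-uniform mesh of
`[a,b]` with constant `cBar`, and every continuous piecewise polynomial `w` of degree `≤ k`,
the sum over all pairs of equal or adjacent elements of the double integrals of
`(w(x)-w(y))²/(x-y)²` is bounded by `C · Σ_i (sup_{e_i} |w|)²`. -/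
theorem adjacent_pairs_bound (cBar : ℝ) (hc : 1 ≤ cBar) (k : ℕ) :
    ∃ C : ℝ, 0 < C ∧
      ∀ (a b : ℝ) (_hab : a < b) (r : ℕ) (_hr : 0 < r) (ξ : ℕ → ℝ)
        (_h0 : ξ 0 = a) (_hr' : ξ r = b) (_hmono : ∀ i < r, ξ i < ξ (i + 1))
        -- quasi-uniformity: the ratio of any two element lengths is at most `cBar`
        (_hqu : ∀ i < r, ∀ j < r, ξ (i + 1) - ξ i ≤ cBar * (ξ (j + 1) - ξ j))
        (w : ℝ → ℝ) (_hcont : ContinuousOn w (Icc a b))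
        -- `w ∈ 𝕊_k(𝒯)`
        (_hpoly : ∀ i < r, ∃ p : Polynomial ℝ, p.natDegree ≤ k ∧
          ∀ t ∈ Ioo (ξ i) (ξ (i + 1)), w t = p.eval t),
        (∑ i ∈ Finset.range r,
            ∑ j ∈ (Finset.range r).filter (fun j => j ≤ i + 1 ∧ i ≤ j + 1),
              ∫ s in Ioo (ξ i) (ξ (i + 1)), ∫ t in Ioo (ξ j) (ξ (j + 1)),
                (w s - w t) ^ 2 / (s - t) ^ 2) ≤
          C * ∑ i ∈ Finset.range r,
              (sSup ((fun t => |w t|) '' Ioo (ξ i) (ξ (i + 1)))) ^ 2 := by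
  obtain ⟨M, hM0, hM⟩ := markov_s4 k
  refine ⟨12 * M ^ 2 * cBar + 1, by positivity, ?_⟩
  intro a b hab r hr ξ h0 hr' hmono hqu w hcont hpoly
  set S : ℕ → ℝ := fun i => sSup ((fun t => |w t|) '' Ioo (ξ i) (ξ (i + 1))) with hSdef
  have hS0 : ∀ i, 0 ≤ S i := by
    intro i
    refine Real.sSup_nonneg ?_
    rintro _ ⟨t, _, rfl⟩
    exact abs_nonneg _
  have hle : ∀ n, n ≤ r → ∀ m, m ≤ n → ξ m ≤ ξ n := by
    intro n
    induction n with
    | zero => intro _ m hm; rw [Nat.le_zero.mp hm]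
    | succ n ih =>
      intro hn m hm
      rcases Nat.lt_or_ge m (n + 1) with h | h
      · exact (ih (by omega) m (by omega)).trans (hmono n (by omega)).le
      · rw [le_antisymm hm h]
  have hlip : ∀ i < r, ∀ s ∈ Icc (ξ i) (ξ (i + 1)), ∀ t ∈ Icc (ξ i) (ξ (i + 1)),
      |w s - w t| ≤ M * S i / (ξ (i + 1) - ξ i) * |s - t| := by
    intro i hi
    refine hM _ _ (hmono i hi) w (hcont.mono (Icc_subset_Icc ?_ ?_)) (hpoly i hi)
    · rw [← h0]; exact hle i hi.le 0 (Nat.zero_le _)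
    · rw [← hr']; exact hle r le_rfl _ hi
  have hL0 : ∀ i < r, 0 ≤ M * S i / (ξ (i + 1) - ξ i) := fun i hi =>
    div_nonneg (mul_nonneg hM0 (hS0 i)) (sub_pos.mpr (hmono i hi)).le
  have hpair : ∀ i < r, ∀ j < r, j ≤ i + 1 → i ≤ j + 1 →
      (∫ s in Ioo (ξ i) (ξ (i + 1)), ∫ t in Ioo (ξ j) (ξ (j + 1)),
                (w s - w t) ^ 2 / (s - t) ^ 2) ≤ 2 * M ^ 2 * cBar * (S i ^ 2 + S j ^ 2) := by
    intro i hi j hj h1 h2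
    refine (pair_bound _ _ _ _ (hmono i hi) (hmono j hj)
      (M * S i / (ξ (i + 1) - ξ i) + M * S j / (ξ (j + 1) - ξ j)) w ?_).trans
      (pair_alg _ _ _ _ _ _ (sub_pos.mpr (hmono i hi)) (sub_pos.mpr (hmono j hj))
        (hqu i hi j hj) (hqu j hj i hi))
    intro s hs t ht
    rcases (by omega : i = j ∨ j = i + 1 ∨ i = j + 1) with h | h | h
    · subst h
      refine (hlip i hi s (Ioo_subset_Icc_self hs) t (Ioo_subset_Icc_self ht)).trans ?_
      exact mul_le_mul_of_nonneg_right (le_add_of_nonneg_right (hL0 i hi)) (abs_nonneg _)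
    · subst h
      exact glue w _ _ _ _ _ (hL0 _ hi) (hL0 _ hj) (hlip _ hi) (hlip _ hj) s t hs ht
    · subst h
      rw [abs_sub_comm (w s), abs_sub_comm s, add_comm (M * S (j + 1) / _)]
      exact glue w _ _ _ _ _ (hL0 _ hj) (hL0 _ hi) (hlip _ hj) (hlip _ hi) t s ht hs
  calc _ ≤ ∑ i ∈ Finset.range r,
            ∑ j ∈ (Finset.range r).filter (fun j => j ≤ i + 1 ∧ i ≤ j + 1),
            2 * M ^ 2 * cBar * (S i ^ 2 + S j ^ 2) := by
        refine Finset.sum_le_sum fun i hi => Finset.sum_le_sum fun j hj => ?_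
        simp only [Finset.mem_filter, Finset.mem_range] at hi hj
        exact hpair i hi j hj.1 hj.2.1 hj.2.2
    _ = 2 * M ^ 2 * cBar * ∑ i ∈ Finset.range r,
            ∑ j ∈ (Finset.range r).filter (fun j => j ≤ i + 1 ∧ i ≤ j + 1),
            (S i ^ 2 + S j ^ 2) := by simp only [Finset.mul_sum]
    _ ≤ 2 * M ^ 2 * cBar * (6 * ∑ i ∈ Finset.range r, S i ^ 2) := by
        refine mul_le_mul_of_nonneg_left (sum_bound r (fun i => S i ^ 2) fun i => sq_nonneg _) ?_
        positivity
    _ ≤ (12 * M ^ 2 * cBar + 1) * ∑ i ∈ Finset.range r, S i ^ 2 := by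
        have : 0 ≤ ∑ i ∈ Finset.range r, S i ^ 2 := Finset.sum_nonneg fun i _ => sq_nonneg _
        linarith
end

section
/- For every c̄ ≥ 1 and every k ∈ ℕ there exists a constant C > 0 (depending only on c̄ and k) with the following property: for every compact interval [a,b], every mesh 𝒯 of [a,b] that is quasi-uniform with constant c̄, and every w ∈ 𝕊_k(𝒯) with w(a) = w(b) = 0, one has ∫_a^b ∫_a^b (w(x) − w(y))²/(x − y)² dx dy + ∫_a^b w(x)²/ρ(x) dx ≤ C · Σ_{i=1}^{r} (sup_{x ∈ e_i} |w(x)|)², where ρ(x) = min(x − a, b − x) denotes the distance of x from the nearest endpoint of [a,b]. (The left-hand side is the square of the H^{1/2}_{00} norm of w on [a,b].) -/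
open MeasureTheory Set

lemma hh_markov (k : ℕ) : ∃ K : ℝ, 1 ≤ K ∧ ∀ (α β : ℝ), α < β → ∀ p : Polynomial ℝ,
    p.natDegree ≤ k → ∀ M : ℝ, (∀ t ∈ Icc α β, |p.eval t| ≤ M) →
    ∀ s ∈ Icc α β, ∀ t ∈ Icc α β, |p.eval s - p.eval t| ≤ K * M / (β - α) * |s - t| := by
  classical
  have hlip : ∀ q : Polynomial ℝ, ∃ B : ℝ, 0 ≤ B ∧ ∀ s ∈ Icc (0:ℝ) 1, ∀ t ∈ Icc (0:ℝ) 1,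
      |q.eval s - q.eval t| ≤ B * |s - t| := by
    intro q
    obtain ⟨B, hB⟩ := isCompact_Icc.exists_bound_of_continuousOn
      (f := fun x => q.derivative.eval x) (s := Icc (0:ℝ) 1) (by fun_prop)
    refine ⟨B, le_trans (norm_nonneg _) (hB 0 (by simp)), fun s hs t ht => ?_⟩
    have := (convex_Icc (0:ℝ) 1).norm_image_sub_le_of_norm_deriv_le (f := fun x => q.eval x)
      (C := B) (fun x _ => q.differentiable x)
      (fun x hx => by simpa using hB x hx) ht hs
    simpa using this
  choose B hB0 hB using hlip
  let v : ℕ → ℝ := fun j => (j:ℝ) / (k + 1)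
  have hk : (0:ℝ) < k + 1 := by positivity
  have hv : Set.InjOn v (Finset.range (k+1)) := by
    intro i _ j _ hij
    simp only [v] at hij
    rw [div_left_inj' hk.ne'] at hij
    exact_mod_cast hij
  have hvI : ∀ j ∈ Finset.range (k+1), v j ∈ Icc (0:ℝ) 1 := by
    intro j hj
    have : (j:ℝ) < k + 1 := by exact_mod_cast Finset.mem_range.1 hj
    exact ⟨by positivity, by rw [div_le_one hk]; exact this.le⟩
  let S := ∑ j ∈ Finset.range (k+1), B (Lagrange.basis (Finset.range (k+1)) v j)
  have hS : 0 ≤ S := Finset.sum_nonneg fun j _ => hB0 _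
  refine ⟨1 + S, by linarith, ?_⟩
  have main : ∀ p : Polynomial ℝ, p.natDegree ≤ k → ∀ M : ℝ,
      (∀ t ∈ Icc (0:ℝ) 1, |p.eval t| ≤ M) → ∀ s ∈ Icc (0:ℝ) 1, ∀ t ∈ Icc (0:ℝ) 1,
      |p.eval s - p.eval t| ≤ (1 + S) * M * |s - t| := by
    intro p hp M hM s hs t ht
    have hM0 : 0 ≤ M := (abs_nonneg _).trans (hM 0 (by simp))
    have hpe := Lagrange.eq_interpolate (f := p) hv (by
      rw [Finset.card_range]
      exact lt_of_le_of_lt Polynomial.degree_le_natDegree (by exact_mod_cast Nat.lt_succ_of_le hp))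
    have he : ∀ x, p.eval x = ∑ j ∈ Finset.range (k+1),
        p.eval (v j) * (Lagrange.basis (Finset.range (k+1)) v j).eval x := by
      intro x
      conv_lhs => rw [hpe]
      simp [Lagrange.interpolate_apply, Polynomial.eval_finsetSum]
    rw [he s, he t, ← Finset.sum_sub_distrib]
    calc _ ≤ ∑ j ∈ Finset.range (k+1), M * (B (Lagrange.basis (Finset.range (k+1)) v j) * |s - t|) := by
          refine (Finset.abs_sum_le_sum_abs _ _).trans (Finset.sum_le_sum fun j hj => ?_)
          rw [← mul_sub, abs_mul]
          exact mul_le_mul (hM _ (hvI j hj)) (hB _ s hs t ht) (abs_nonneg _) hM0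
      _ = S * M * |s - t| := by
          simp only [S, Finset.sum_mul]
          exact Finset.sum_congr rfl fun j _ => by ring
      _ ≤ _ := by
          have := mul_nonneg hM0 (abs_nonneg (s - t))
          nlinarith
  intro α β hαβ p hp M hM s hs t ht
  have hl : 0 < β - α := by linarith
  let q := p.comp (Polynomial.C (β - α) * Polynomial.X + Polynomial.C α)
  have hq : ∀ x, q.eval x = p.eval ((β - α) * x + α) := by intro x; simp [q]
  have hqd : q.natDegree ≤ k := by
    refine Polynomial.natDegree_comp_le.trans ?_
    have := Polynomial.natDegree_linear_le (a := β - α) (b := α)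
    nlinarith
  have h1 := main q hqd M (by
    intro x hx
    rw [hq]
    apply hM
    constructor <;> nlinarith [hx.1, hx.2]) ((s - α) / (β - α))
    ⟨div_nonneg (by linarith [hs.1]) hl.le, by rw [div_le_one hl]; linarith [hs.2]⟩
    ((t - α) / (β - α))
    ⟨div_nonneg (by linarith [ht.1]) hl.le, by rw [div_le_one hl]; linarith [ht.2]⟩
  rw [hq, hq, mul_div_cancel₀ _ hl.ne', mul_div_cancel₀ _ hl.ne', sub_add_cancel, sub_add_cancel,
    ← sub_div, abs_div, abs_of_pos hl] at h1
  refine h1.trans (le_of_eq ?_)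
  rw [sub_sub_sub_cancel_right]
  ring

lemma hh_kernel (h : ℝ) (hh : 0 < h) (s : ℝ) :
    Integrable (fun t : ℝ => 2 / (h ^ 2 + (s - t) ^ 2)) ∧
    ∫ t, 2 / (h ^ 2 + (s - t) ^ 2) = 2 * Real.pi / h := by
  have e : (fun t : ℝ => 2 / (h ^ 2 + (s - t) ^ 2)) =
      fun t => (fun u => (2 / h ^ 2) * (fun x : ℝ => (1 + x ^ 2)⁻¹) (u / h)) (s - t) := by
    ext t
    simp only
    field_simp
  have i1 : Integrable (fun u : ℝ => (2 / h ^ 2) * (fun x : ℝ => (1 + x ^ 2)⁻¹) (u / h)) :=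
    (integrable_inv_one_add_sq.comp_div hh.ne').const_mul _
  rw [e]
  refine ⟨i1.comp_sub_left s, ?_⟩
  rw [integral_sub_left_eq_self (fun u : ℝ => (2 / h ^ 2) * (fun x : ℝ => (1 + x ^ 2)⁻¹) (u / h)) volume s, integral_const_mul, Measure.integral_comp_div (fun x : ℝ => (1 + x ^ 2)⁻¹) h, integral_univ_inv_one_add_sq,
    abs_of_pos hh, smul_eq_mul]
  field_simp

lemma hh_double (a b h B : ℝ) (hh : 0 < h) (q : ℝ → ℝ) (hq : Measurable q) (hq0 : ∀ x, 0 ≤ q x)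
    (hqB : ∀ x, q x ≤ B) (f : ℝ → ℝ → ℝ) (D : ℝ) (hD : 0 ≤ D) (hf0 : ∀ s t, 0 ≤ f s t)
    (hf : ∀ s ∈ Ioo a b, ∀ t ∈ Ioo a b, f s t ≤ D * ((q s + q t) * (2 / (h ^ 2 + (s - t) ^ 2)))) :
    ∫ s in Ioo a b, ∫ t in Ioo a b, f s t ≤ D * (4 * Real.pi / h * ∫ s in Ioo a b, q s) := by
  let μ := (volume : Measure ℝ).restrict (Ioo a b)
  have : IsFiniteMeasure μ := ⟨by simp [μ]⟩
  have hkb : ∀ s t : ℝ, 2 / (h ^ 2 + (s - t) ^ 2) ≤ 2 / h ^ 2 := fun s t => by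
    gcongr; nlinarith [sq_nonneg (s - t)]
  have hk0 : ∀ s t : ℝ, 0 ≤ 2 / (h ^ 2 + (s - t) ^ 2) := fun s t => by positivity
  have I1 : Integrable (fun z : ℝ × ℝ => q z.1 * (2 / (h ^ 2 + (z.1 - z.2) ^ 2))) (μ.prod μ) := by
    refine Integrable.of_bound (C := B * (2 / h ^ 2)) (by fun_prop) (ae_of_all _ fun z => ?_)
    rw [Real.norm_of_nonneg (mul_nonneg (hq0 _) (hk0 _ _))]
    exact mul_le_mul (hqB _) (hkb _ _) (hk0 _ _) ((hq0 0).trans (hqB 0))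
  have I2 : Integrable (fun z : ℝ × ℝ => q z.2 * (2 / (h ^ 2 + (z.1 - z.2) ^ 2))) (μ.prod μ) := by
    refine Integrable.of_bound (C := B * (2 / h ^ 2)) (by fun_prop) (ae_of_all _ fun z => ?_)
    rw [Real.norm_of_nonneg (mul_nonneg (hq0 _) (hk0 _ _))]
    exact mul_le_mul (hqB _) (hkb _ _) (hk0 _ _) ((hq0 0).trans (hqB 0))
  have Iq : Integrable q μ := Integrable.of_bound (C := B) (by fun_prop) (ae_of_all _ fun z => by
    rw [Real.norm_of_nonneg (hq0 _)]; exact hqB _)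
  have hin : ∀ s, ∫ t, q s * (2 / (h ^ 2 + (s - t) ^ 2)) ∂μ ≤ q s * (2 * Real.pi / h) := by
    intro s
    rw [integral_const_mul]
    refine mul_le_mul_of_nonneg_left ?_ (hq0 s)
    rw [← (hh_kernel h hh s).2]
    exact setIntegral_le_integral (hh_kernel h hh s).1 (ae_of_all _ fun t => hk0 s t)
  have J1 : ∫ s, ∫ t, q s * (2 / (h ^ 2 + (s - t) ^ 2)) ∂μ ∂μ ≤ 2 * Real.pi / h * ∫ s, q s ∂μ := by
    rw [mul_comm, ← integral_mul_const]
    exact integral_mono I1.integral_prod_left (Iq.mul_const _) hin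
  have J2 : ∫ s, ∫ t, q t * (2 / (h ^ 2 + (s - t) ^ 2)) ∂μ ∂μ ≤ 2 * Real.pi / h * ∫ s, q s ∂μ := by
    rw [integral_integral_swap I2]
    refine le_trans (le_of_eq ?_) J1
    refine integral_congr_ae (ae_of_all _ fun s => integral_congr_ae (ae_of_all _ fun t => ?_))
    simp only
    rw [show (t - s) ^ 2 = (s - t) ^ 2 by ring]
  have I3 := (I1.add I2).const_mul D
  have hF : ∫ s, ∫ t, D * ((q s + q t) * (2 / (h ^ 2 + (s - t) ^ 2))) ∂μ ∂μ =
      D * ((∫ s, ∫ t, q s * (2 / (h ^ 2 + (s - t) ^ 2)) ∂μ ∂μ) +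
       ∫ s, ∫ t, q t * (2 / (h ^ 2 + (s - t) ^ 2)) ∂μ ∂μ) := by
    rw [← integral_prod _ I1, ← integral_prod _ I2, ← integral_add I1 I2, ← integral_const_mul]
    refine Eq.trans ?_ (integral_prod _ I3).symm
    simp only [Pi.add_apply, add_mul]
  have hIs : ∀ s, Integrable (fun t => D * ((q s + q t) * (2 / (h ^ 2 + (s - t) ^ 2)))) μ := by
    intro s
    refine Integrable.of_bound (C := D * ((B + B) * (2 / h ^ 2))) (by fun_prop) (ae_of_all _ fun t => ?_)
    have := add_nonneg (hq0 s) (hq0 t)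
    rw [Real.norm_of_nonneg (mul_nonneg hD (mul_nonneg this (hk0 _ _)))]
    exact mul_le_mul_of_nonneg_left (mul_le_mul (add_le_add (hqB s) (hqB t)) (hkb s t) (hk0 s t)
      (by linarith [hqB s, hqB t])) hD
  calc ∫ s in Ioo a b, ∫ t in Ioo a b, f s t
      ≤ ∫ s, ∫ t, D * ((q s + q t) * (2 / (h ^ 2 + (s - t) ^ 2))) ∂μ ∂μ := by
        refine integral_mono_of_nonneg (ae_of_all _ fun s => integral_nonneg (hf0 s)) ?_ ?_
        · refine I3.integral_prod_left.congr (ae_of_all _ fun s => ?_)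
          simp only [Pi.add_apply, add_mul]
        · refine (ae_restrict_mem measurableSet_Ioo).mono fun s hs => ?_
          refine integral_mono_of_nonneg (ae_of_all _ (hf0 s)) (hIs s) ?_
          exact (ae_restrict_mem measurableSet_Ioo).mono fun t ht => hf s hs t ht
    _ ≤ _ := by
        rw [hF]
        refine mul_le_mul_of_nonneg_left ((add_le_add J1 J2).trans (le_of_eq ?_)) hD
        simp only [μ]; ring

lemma hh_loc (r : ℕ) (ξ : ℕ → ℝ) (s : ℝ) (h0 : ξ 0 < s) (h1 : s ≤ ξ r) :
    ∃ i < r, s ∈ Ioc (ξ i) (ξ (i + 1)) := by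
  induction r with
  | zero => exact absurd h1 (not_le.2 h0)
  | succ n ih =>
    by_cases h : s ≤ ξ n
    · obtain ⟨i, hi, hs⟩ := ih h
      exact ⟨i, by omega, hs⟩
    · exact ⟨n, by omega, not_le.1 h, h1⟩

lemma hh_mono (r : ℕ) (ξ : ℕ → ℝ) (hm : ∀ i < r, ξ i < ξ (i + 1)) (i j : ℕ) (hij : i ≤ j)
    (hj : j ≤ r) : ξ i ≤ ξ j := by
  induction j, hij using Nat.le_induction with
  | base => exact le_rfl
  | succ n _ ih => exact (ih (by omega)).trans (hm n (by omega)).le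

/-- For every `cBar ≥ 1` and `k ∈ ℕ` there is `C > 0` (depending only on
`cBar` and `k`) such that for every compact interval `[a,b]`, every quasi-uniform mesh of
`[a,b]` with constant `cBar`, and every continuous piecewise polynomial `w` of degree `≤ k`
vanishing at the endpoints, the squared `H^{1/2}_{00}` norm
`∫∫ (w(x)-w(y))²/(x-y)² + ∫ w(x)²/ρ(x)` is bounded by `C · Σ_i (sup_{e_i} |w|)²`,
where `ρ(x) = min(x-a, b-x)`. -/
theorem h_half_00_norm_bound (cBar : ℝ) (hc : 1 ≤ cBar) (k : ℕ) :
    ∃ C : ℝ, 0 < C ∧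
      ∀ (a b : ℝ) (_hab : a < b) (r : ℕ) (_hr : 0 < r) (ξ : ℕ → ℝ)
        (_h0 : ξ 0 = a) (_hr' : ξ r = b) (_hmono : ∀ i < r, ξ i < ξ (i + 1))
        -- quasi-uniformity: the ratio of any two element lengths is at most `cBar`
        (_hqu : ∀ i < r, ∀ j < r, ξ (i + 1) - ξ i ≤ cBar * (ξ (j + 1) - ξ j))
        (w : ℝ → ℝ) (_hcont : ContinuousOn w (Icc a b))
        -- `w ∈ 𝕊_k(𝒯)`
        (_hpoly : ∀ i < r, ∃ p : Polynomial ℝ, p.natDegree ≤ k ∧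
          ∀ t ∈ Ioo (ξ i) (ξ (i + 1)), w t = p.eval t)
        (_ha : w a = 0) (_hb : w b = 0),
        (∫ s in Ioo a b, ∫ t in Ioo a b, (w s - w t) ^ 2 / (s - t) ^ 2) +
            (∫ s in Ioo a b, (w s) ^ 2 / min (s - a) (b - s)) ≤
          C * ∑ i ∈ Finset.range r,
              (sSup ((fun t => |w t|) '' Ioo (ξ i) (ξ (i + 1)))) ^ 2 := by
  obtain ⟨K, hK1, hK⟩ := hh_markov k
  have hK0 : 0 < K := by linarith
  have hc0 : 0 < cBar := by linarith
  refine ⟨(8 * Real.pi + 1) * K ^ 2 * cBar ^ 2, by positivity, ?_⟩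
  intro a b hab r hr ξ h0 hr' hmono hqu w hcont hpoly ha hb
  have hmon := hh_mono r ξ hmono
  set M : ℕ → ℝ := fun i => sSup ((fun t => |w t|) '' Ioo (ξ i) (ξ (i + 1))) with hMdef
  set h : ℝ := (ξ 1 - ξ 0) / cBar with hhdef
  have hh : 0 < h := div_pos (sub_pos.2 (hmono 0 hr)) hc0
  have hle : ∀ j < r, h ≤ ξ (j + 1) - ξ j := by
    intro j hj
    rw [hhdef, div_le_iff₀ hc0, mul_comm]
    exact hqu 0 hr j hj
  have hge : ∀ j < r, ξ (j + 1) - ξ j ≤ cBar ^ 2 * h := by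
    intro j hj
    have h1 := hqu j hj 0 hr
    have h2 : cBar ^ 2 * h = cBar * (ξ 1 - ξ 0) := by rw [hhdef]; field_simp
    rw [h2]; exact h1
  have hsub : ∀ i < r, Icc (ξ i) (ξ (i + 1)) ⊆ Icc a b := by
    intro i hi
    apply Icc_subset_Icc
    · rw [← h0]; exact hmon 0 i (by omega) (by omega)
    · rw [← hr']; exact hmon (i + 1) r (by omega) (by omega)
  have hM : ∀ i < r, ∀ t ∈ Icc (ξ i) (ξ (i + 1)), |w t| ≤ M i := by
    intro i hi
    have hci : ContinuousOn (fun t => |w t|) (Icc (ξ i) (ξ (i + 1))) := (hcont.mono (hsub i hi)).abs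
    have hbdd : BddAbove ((fun t => |w t|) '' Ioo (ξ i) (ξ (i + 1))) :=
      (isCompact_Icc.bddAbove_image hci).mono (image_mono Ioo_subset_Icc_self)
    have hcl := closure_Ioo (hmono i hi).ne
    intro t ht
    refine le_on_closure (s := Ioo (ξ i) (ξ (i + 1))) (f := fun t => |w t|) (g := fun _ => M i)
      (fun x hx => le_csSup hbdd (mem_image_of_mem _ hx)) (by rw [hcl]; exact hci)
      continuousOn_const (by rw [hcl]; exact ht)
  have hM0 : ∀ i < r, 0 ≤ M i := fun i hi =>
    (abs_nonneg _).trans (hM i hi (ξ i) (left_mem_Icc.2 (hmono i hi).le))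
  have hLip : ∀ i < r, ∀ s ∈ Icc (ξ i) (ξ (i + 1)), ∀ t ∈ Icc (ξ i) (ξ (i + 1)),
      |w s - w t| ≤ K / h * M i * |s - t| := by
    intro i hi s hs t ht
    obtain ⟨p, hpd, hp⟩ := hpoly i hi
    have hcl := closure_Ioo (hmono i hi).ne
    have heq : EqOn w (fun t => p.eval t) (Icc (ξ i) (ξ (i + 1))) :=
      EqOn.of_subset_closure (s := Ioo (ξ i) (ξ (i + 1))) (fun t ht => hp t ht)
        (hcont.mono (hsub i hi)) (by fun_prop) Ioo_subset_Icc_self (by rw [hcl])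
    have h1 := hK (ξ i) (ξ (i + 1)) (hmono i hi) p hpd (M i)
      (fun t ht => by have := hM i hi t ht; rwa [heq ht] at this) s hs t ht
    rw [heq hs, heq ht]
    refine h1.trans (mul_le_mul_of_nonneg_right ?_ (abs_nonneg _))
    rw [div_mul_eq_mul_div]
    exact div_le_div_of_nonneg_left (mul_nonneg hK0.le (hM0 i hi)) hh (hle i hi)
  let q : ℝ → ℝ := fun s => ∑ i ∈ Finset.range r, (Ioc (ξ i) (ξ (i + 1))).indicator
    (fun _ => M i ^ 2) s
  have hqm : Measurable q := by
    apply Finset.measurable_fun_sum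
    intro i _
    exact measurable_const.indicator measurableSet_Ioc
  have hind0 : ∀ i s, 0 ≤ (Ioc (ξ i) (ξ (i + 1))).indicator (fun _ => M i ^ 2) s := fun i s =>
    indicator_nonneg (fun _ _ => sq_nonneg _) _
  have hq0 : ∀ s, 0 ≤ q s := fun s => Finset.sum_nonneg fun i _ => hind0 i s
  have hqB : ∀ s, q s ≤ ∑ i ∈ Finset.range r, M i ^ 2 := fun s => Finset.sum_le_sum fun i _ =>
    indicator_le_self' (fun _ _ => sq_nonneg _) s
  have hqM : ∀ i < r, ∀ s ∈ Ioc (ξ i) (ξ (i + 1)), M i ^ 2 ≤ q s := by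
    intro i hi s hs
    have := Finset.single_le_sum (f := fun i => (Ioc (ξ i) (ξ (i + 1))).indicator
      (fun _ => M i ^ 2) s) (fun i _ => hind0 i s) (Finset.mem_range.2 hi)
    simpa [indicator_of_mem hs] using this
  have hloc : ∀ s ∈ Ioo a b, ∃ i < r, s ∈ Ioc (ξ i) (ξ (i + 1)) := fun s hs =>
    hh_loc r ξ s (by rw [h0]; exact hs.1) (by rw [hr']; exact hs.2.le)
  have hwq : ∀ s ∈ Ioo a b, w s ^ 2 ≤ q s := by
    intro s hs
    obtain ⟨i, hi, hsi⟩ := hloc s hs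
    refine le_trans ?_ (hqM i hi s hsi)
    rw [← sq_abs]
    exact pow_le_pow_left₀ (abs_nonneg _) (hM i hi s (Ioc_subset_Icc_self hsi)) 2
  -- the integral of the step function
  have hqint : ∫ s in Ioo a b, q s ≤ cBar ^ 2 * h * ∑ i ∈ Finset.range r, M i ^ 2 := by
    have hi : ∀ i ∈ Finset.range r, Integrable ((Ioc (ξ i) (ξ (i + 1))).indicator
        (fun _ => M i ^ 2)) volume := fun i _ =>
      (integrable_indicator_iff measurableSet_Ioc).2 (integrableOn_const (by simp))
    refine (setIntegral_le_integral (integrable_finsetSum _ hi) (ae_of_all _ hq0)).trans ?_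
    rw [integral_finsetSum _ hi, Finset.mul_sum]
    refine Finset.sum_le_sum fun i hi => ?_
    have hir := Finset.mem_range.1 hi
    rw [integral_indicator measurableSet_Ioc, setIntegral_const, smul_eq_mul,
      Real.volume_real_Ioc_of_le (hmono i hir).le]
    exact mul_le_mul_of_nonneg_right (hge i hir) (sq_nonneg _)
  have hqi0 : 0 ≤ ∫ s in Ioo a b, q s := integral_nonneg hq0
  -- near-diagonal bound
  have hnear : ∀ s ∈ Ioo a b, ∀ t ∈ Ioo a b, s ≤ t → t - s < h →
      (w s - w t) ^ 2 ≤ 2 * K ^ 2 / h ^ 2 * (q s + q t) * (s - t) ^ 2 := by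
    intro s hs t ht hst hlt
    obtain ⟨i, hi, hsi⟩ := hloc s hs
    obtain ⟨j, hj, htj⟩ := hloc t ht
    have hqi := hqM i hi s hsi
    have hqj := hqM j hj t htj
    have hMi := hM0 i hi
    have hMj := hM0 j hj
    have hab' : |w s - w t| ≤ K / h * (M i + M j) * |s - t| := by
      have hij : i ≤ j := by
        by_contra hcon
        have := hmon (j + 1) i (by omega) hi.le
        linarith [hsi.1, htj.2]
      have hji : j ≤ i + 1 := by
        by_contra hcon
        have h1 := hmon (i + 1 + 1) j (by omega) hj.le
        have h2 := hle (i + 1) (by omega)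
        linarith [hsi.2, htj.1]
      have hKh : 0 ≤ K / h := by positivity
      rcases Nat.lt_or_ge i j with hlt' | hge'
      · have hj' : j = i + 1 := by omega
        subst hj'
        have e1 := hLip i hi s (Ioc_subset_Icc_self hsi) (ξ (i + 1))
          (right_mem_Icc.2 (hmono i hi).le)
        have e2 := hLip (i + 1) hj (ξ (i + 1)) (left_mem_Icc.2 (hmono _ hj).le) t
          (Ioc_subset_Icc_self htj)
        have e3 := abs_sub_le (w s) (w (ξ (i + 1))) (w t)
        rw [abs_of_nonpos (by linarith [hsi.2] : s - ξ (i + 1) ≤ 0)] at e1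
        rw [abs_of_nonpos (by linarith [htj.1] : ξ (i + 1) - t ≤ 0)] at e2
        rw [abs_of_nonpos (by linarith : s - t ≤ 0)]
        have f1 : K / h * M i * -(s - ξ (i + 1)) ≤ K / h * M i * -(s - t) :=
          mul_le_mul_of_nonneg_left (by linarith [htj.1]) (by positivity)
        have f2 : K / h * M (i + 1) * -(ξ (i + 1) - t) ≤ K / h * M (i + 1) * -(s - t) :=
          mul_le_mul_of_nonneg_left (by linarith [hsi.2]) (by positivity)
        calc _ ≤ _ := e3
          _ ≤ _ := add_le_add (e1.trans f1) (e2.trans f2)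
          _ = _ := by ring
      · have hj' : j = i := by omega
        subst hj'
        refine (hLip j hj s (Ioc_subset_Icc_self hsi) t (Ioc_subset_Icc_self htj)).trans ?_
        gcongr
        linarith
    have hsq : (w s - w t) ^ 2 ≤ (K / h * (M i + M j) * |s - t|) ^ 2 := by
      rw [← sq_abs]
      exact pow_le_pow_left₀ (abs_nonneg _) hab' 2
    refine hsq.trans ?_
    rw [mul_pow, sq_abs]
    refine mul_le_mul_of_nonneg_right ?_ (sq_nonneg _)
    have : (M i + M j) ^ 2 ≤ 2 * (q s + q t) := by nlinarith [sq_nonneg (M i - M j)]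
    calc (K / h * (M i + M j)) ^ 2 = K ^ 2 / h ^ 2 * (M i + M j) ^ 2 := by ring
      _ ≤ K ^ 2 / h ^ 2 * (2 * (q s + q t)) := by gcongr
      _ = _ := by ring
  have hpt : ∀ s ∈ Ioo a b, ∀ t ∈ Ioo a b, (w s - w t) ^ 2 / (s - t) ^ 2 ≤
      2 * K ^ 2 * ((q s + q t) * (2 / (h ^ 2 + (s - t) ^ 2))) := by
    intro s hs t ht
    have hqq := add_nonneg (hq0 s) (hq0 t)
    rcases eq_or_ne s t with rfl | hne
    · simp only [sub_self, ne_eq, OfNat.ofNat_ne_zero, not_false_eq_true, zero_pow, div_zero]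
      positivity
    have hpos : 0 < (s - t) ^ 2 := by
      have := sub_ne_zero.2 hne
      positivity
    rw [div_le_iff₀ hpos]
    rcases lt_or_ge |s - t| h with hlt | hge'
    · have hn : (w s - w t) ^ 2 ≤ 2 * K ^ 2 / h ^ 2 * (q s + q t) * (s - t) ^ 2 := by
        rcases le_total s t with hst | hst
        · exact hnear s hs t ht hst (by rw [abs_of_nonpos (by linarith)] at hlt; linarith)
        · have := hnear t ht s hs hst (by rw [abs_of_nonneg (by linarith)] at hlt; linarith)
          calc (w s - w t) ^ 2 = (w t - w s) ^ 2 := by ring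
            _ ≤ _ := this
            _ = _ := by ring
      refine hn.trans (mul_le_mul_of_nonneg_right ?_ hpos.le)
      have hk : 1 / h ^ 2 ≤ 2 / (h ^ 2 + (s - t) ^ 2) := by
        rw [div_le_div_iff₀ (by positivity) (by positivity)]
        have : (s - t) ^ 2 ≤ h ^ 2 := by
          rw [← sq_abs]; exact pow_le_pow_left₀ (abs_nonneg _) hlt.le 2
        linarith
      calc 2 * K ^ 2 / h ^ 2 * (q s + q t) = 2 * K ^ 2 * ((q s + q t) * (1 / h ^ 2)) := by ring
        _ ≤ _ := by gcongr
    · have hk : 1 ≤ 2 / (h ^ 2 + (s - t) ^ 2) * (s - t) ^ 2 := by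
        rw [div_mul_eq_mul_div, le_div_iff₀ (by positivity)]
        have : h ^ 2 ≤ (s - t) ^ 2 := by
          rw [← sq_abs (s - t)]; exact pow_le_pow_left₀ hh.le hge' 2
        linarith
      have h1 : (w s - w t) ^ 2 ≤ 2 * (q s + q t) := by
        nlinarith [hwq s hs, hwq t ht, sq_nonneg (w s + w t)]
      calc (w s - w t) ^ 2 ≤ 2 * (q s + q t) := h1
        _ = 2 * 1 ^ 2 * ((q s + q t) * 1) := by ring
        _ ≤ 2 * K ^ 2 * ((q s + q t) * (2 / (h ^ 2 + (s - t) ^ 2) * (s - t) ^ 2)) := by gcongr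
        _ = _ := by ring
  have T1 := hh_double a b h _ hh q hqm hq0 hqB (fun s t => (w s - w t) ^ 2 / (s - t) ^ 2)
    (2 * K ^ 2) (by positivity) (fun s t => by positivity) hpt
  -- boundary term
  have haux : ∀ s ∈ Ioo a b, ∀ d, 0 < d → (d < h → |w s| ^ 2 ≤ (K / h * d) ^ 2 * q s) →
      w s ^ 2 / d ≤ K ^ 2 / h * q s := by
    intro s hs d hd hsm
    have hqs := hq0 s
    rw [div_le_iff₀ hd]
    rcases lt_or_ge d h with hlt | hge'
    · have := hsm hlt
      rw [sq_abs] at this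
      refine this.trans ?_
      calc (K / h * d) ^ 2 * q s = K ^ 2 / h * q s * d * (d / h) := by ring
        _ ≤ K ^ 2 / h * q s * d * 1 := by
          gcongr
          rw [div_le_one hh]; exact hlt.le
        _ = _ := by ring
    · refine (hwq s hs).trans ?_
      have h1 : 1 ≤ d / h := by rwa [one_le_div hh]
      calc q s = 1 ^ 2 * q s * 1 := by ring
        _ ≤ K ^ 2 * q s * (d / h) := by gcongr
        _ = _ := by ring
  have hA : ∀ s ∈ Ioo a b, w s ^ 2 / (s - a) ≤ K ^ 2 / h * q s := by
    intro s hs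
    refine haux s hs _ (by linarith [hs.1]) fun hd => ?_
    have h1 := hle 0 hr
    have hs0 : s ∈ Ioc (ξ 0) (ξ (0 + 1)) := ⟨by rw [h0]; exact hs.1, by linarith⟩
    have h2 := hLip 0 hr s (Ioc_subset_Icc_self hs0) (ξ 0) (left_mem_Icc.2 (hmono 0 hr).le)
    rw [h0, ha, sub_zero, abs_of_pos (by linarith [hs.1] : 0 < s - a)] at h2
    calc |w s| ^ 2 ≤ (K / h * M 0 * (s - a)) ^ 2 := pow_le_pow_left₀ (abs_nonneg _) h2 2
      _ = (K / h * (s - a)) ^ 2 * M 0 ^ 2 := by ring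
      _ ≤ _ := mul_le_mul_of_nonneg_left (hqM 0 hr s hs0) (sq_nonneg _)
  have hB : ∀ s ∈ Ioo a b, w s ^ 2 / (b - s) ≤ K ^ 2 / h * q s := by
    intro s hs
    refine haux s hs _ (by linarith [hs.2]) fun hd => ?_
    obtain ⟨n, rfl⟩ : ∃ n, r = n + 1 := ⟨r - 1, by omega⟩
    have hn : n < n + 1 := by omega
    have h1 := hle n hn
    have hs0 : s ∈ Ioc (ξ n) (ξ (n + 1)) := ⟨by linarith, by rw [hr']; exact hs.2.le⟩
    have h2 := hLip n hn s (Ioc_subset_Icc_self hs0) (ξ (n + 1)) (right_mem_Icc.2 (hmono n hn).le)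
    rw [hr', hb, sub_zero, abs_of_neg (by linarith [hs.2] : s - b < 0)] at h2
    calc |w s| ^ 2 ≤ (K / h * M n * -(s - b)) ^ 2 := pow_le_pow_left₀ (abs_nonneg _) h2 2
      _ = (K / h * (b - s)) ^ 2 * M n ^ 2 := by ring
      _ ≤ _ := mul_le_mul_of_nonneg_left (hqM n hn s hs0) (sq_nonneg _)
  have T2 : ∫ s in Ioo a b, w s ^ 2 / min (s - a) (b - s) ≤ K ^ 2 / h * ∫ s in Ioo a b, q s := by
    rw [← integral_const_mul]
    refine integral_mono_of_nonneg ?_ ?_ ?_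
    · refine (ae_restrict_mem measurableSet_Ioo).mono fun s hs => ?_
      exact div_nonneg (sq_nonneg _) (le_min (by linarith [hs.1]) (by linarith [hs.2]))
    · refine Integrable.const_mul (Integrable.of_bound (C := ∑ i ∈ Finset.range r, M i ^ 2)
        hqm.aestronglyMeasurable (ae_of_all _ fun s => ?_)) _
      rw [Real.norm_of_nonneg (hq0 s)]; exact hqB s
    · refine (ae_restrict_mem measurableSet_Ioo).mono fun s hs => ?_
      rcases min_choice (s - a) (b - s) with e | e
      · simp only [e]; exact hA s hs
      · simp only [e]; exact hB s hs
  have hfin : (8 * Real.pi + 1) * K ^ 2 / h * ∫ s in Ioo a b, q s ≤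
      (8 * Real.pi + 1) * K ^ 2 / h * (cBar ^ 2 * h * ∑ i ∈ Finset.range r, M i ^ 2) :=
    mul_le_mul_of_nonneg_left hqint (by positivity)
  calc _ ≤ _ := add_le_add T1 T2
    _ = (8 * Real.pi + 1) * K ^ 2 / h * ∫ s in Ioo a b, q s := by ring
    _ ≤ _ := hfin
    _ = (8 * Real.pi + 1) * K ^ 2 * cBar ^ 2 * ∑ i ∈ Finset.range r, M i ^ 2 := by field_simp
end
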